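/- arXiv:math/0401309 — 3 statements merged into one kernel-verified Lean document; each statement's English description precedes it below -/
import Mathlib

section
/- Let n ≥ 2, α ∈ (0,2), and let σ be the surface measure on the unit sphere S ⊆ ℝⁿ. Let u be α-harmonic in the open unit ball B and positive on B, and suppose there exists c > 0 such that 0 ≤ u(x) − ∫_{|v|>1} P(x,v) u(v) dv ≤ c (1−|x|)^{α/2−1} for all x ∈ B, where P is the α-stable Poisson kernel of the unit ball. Let h(x) := ∫_S M(x,w) σ(dw). Then there exists a Borel function φ : S → [0,∞) such that for σ-almost every z ∈ S and every β > 1 the limit of u(x)/h(x) as x → z with x ∈ A^β_z exists and equals φ(z), and u(x) = ∫_{|v|>1} P(x,v) u(v) dv + ∫_S M(x,w) φ(w) σ(dw) for every x ∈ B. -/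
open Metric Set MeasureTheory Filter

/-- The α-stable Poisson kernel of the ball `B(x₀, r)`. -/
noncomputable def stablePoissonKernel (n : ℕ) (α : ℝ) (x₀ : EuclideanSpace ℝ (Fin n))
    (r : ℝ) (x v : EuclideanSpace ℝ (Fin n)) : ℝ :=
  (Real.Gamma (n / 2) * Real.pi ^ (-(n : ℝ) / 2 - 1) * Real.sin (Real.pi * α / 2)) *
    ((r ^ 2 - dist x x₀ ^ 2) / (dist v x₀ ^ 2 - r ^ 2)) ^ (α / 2) *
    dist x v ^ (-(n : ℝ))

/-- `u : ℝⁿ → [0,∞)` Borel with `∫ u(x)(1+|x|)^{−n−α} dx < ∞` is α-harmonic in the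
open set `D` if, for every ball whose closure lies in `D` and every point `x` of the
ball, `∫_{|v−x₀|>r} P_{x₀,r}(x,v) u(v) dv` is finite and equals `u(x)`. -/
def IsAlphaHarmonic (n : ℕ) (α : ℝ) (D : Set (EuclideanSpace ℝ (Fin n)))
    (u : EuclideanSpace ℝ (Fin n) → ℝ) : Prop :=
  Measurable u ∧ (∀ x, 0 ≤ u x) ∧
    Integrable (fun x => u x * (1 + ‖x‖) ^ (-(n : ℝ) - α)) ∧
    ∀ (x₀ : EuclideanSpace ℝ (Fin n)) (r : ℝ), 0 < r → closedBall x₀ r ⊆ D →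
      ∀ x ∈ ball x₀ r,
        IntegrableOn (fun v => stablePoissonKernel n α x₀ r x v * u v)
          {v | r < dist v x₀} ∧
        ∫ v in {v | r < dist v x₀}, stablePoissonKernel n α x₀ r x v * u v = u x

/-- Martin kernel of the unit ball for the symmetric α-stable process, normalized at
the origin: `M(x,w) = (1−|x|²)^{α/2} |x−w|^{−n}`. -/
noncomputable def martinKernel (n : ℕ) (α : ℝ) (x w : EuclideanSpace ℝ (Fin n)) : ℝ :=
  (1 - ‖x‖ ^ 2) ^ (α / 2) * dist x w ^ (-(n : ℝ))

/-- Stolz open set of the unit ball at a boundary point `z`, with angle `β > 1`: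
`A^β_z = { y ∈ B : 1−|y| < 1/3 ∧ |y−z| < β(1−|y|) }`. -/
def stolzSet (n : ℕ) (β : ℝ) (z : EuclideanSpace ℝ (Fin n)) :
    Set (EuclideanSpace ℝ (Fin n)) :=
  {y | y ∈ ball (0 : EuclideanSpace ℝ (Fin n)) 1 ∧ 1 - ‖y‖ < 1 / 3 ∧
    dist y z < β * (1 - ‖y‖)}

open scoped ENNReal NNReal Topology

namespace St16

noncomputable def nuS (n : ℕ) : Measure (EuclideanSpace ℝ (Fin n)) :=
  Measure.map Subtype.val (volume : Measure (EuclideanSpace ℝ (Fin n))).toSphere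

noncomputable def tauS (n : ℕ) : Measure (EuclideanSpace ℝ (Fin n)) :=
  μH[(n : ℝ) - 1].restrict (sphere (0 : EuclideanSpace ℝ (Fin n)) 1)

instance (n : ℕ) : IsFiniteMeasure (nuS n) := by
  unfold nuS; infer_instance

lemma nontriv {n : ℕ} (hn : 2 ≤ n) : Nontrivial (EuclideanSpace ℝ (Fin n)) := by
  have : NeZero n := ⟨by omega⟩
  infer_instance

lemma polar {n : ℕ} (hn : 2 ≤ n) {f : EuclideanSpace ℝ (Fin n) → ℝ≥0∞} (hf : Measurable f) :
    ∫⁻ x, f x = ∫⁻ ρ in Ioi (0 : ℝ), ENNReal.ofReal (ρ ^ (n - 1)) *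
      ∫⁻ θ, f (ρ • θ) ∂(nuS n) := by
  have := nontriv hn
  have hp := (volume : Measure (EuclideanSpace ℝ (Fin n))).measurePreserving_homeomorphUnitSphereProd
  have e1 : ∫⁻ x, f x = ∫⁻ x : ({0}ᶜ : Set (EuclideanSpace ℝ (Fin n))), f x ∂(Measure.comap Subtype.val volume) := by
    rw [lintegral_subtype_comap (measurableSet_singleton _).compl]
    rw [restrict_compl_singleton]
  have hsm : Measurable (homeomorphUnitSphereProd (EuclideanSpace ℝ (Fin n))).symm :=
    (homeomorphUnitSphereProd (EuclideanSpace ℝ (Fin n))).symm.continuous.measurable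
  have e2 := hp.lintegral_comp (f := fun p => f ((homeomorphUnitSphereProd (EuclideanSpace ℝ (Fin n))).symm p).1)
    (hf.comp (measurable_subtype_coe.comp hsm))
  simp only [Homeomorph.symm_apply_apply] at e2
  rw [e1, e2, lintegral_prod_symm' (fun p => f ((homeomorphUnitSphereProd (EuclideanSpace ℝ (Fin n))).symm p).1) (hf.comp (measurable_subtype_coe.comp hsm))]
  simp only [homeomorphUnitSphereProd_symm_apply_coe]
  have hfin : Module.finrank ℝ (EuclideanSpace ℝ (Fin n)) = n := by simp
  rw [hfin]
  have hm : Measurable (fun ρ : ℝ => ∫⁻ θ, f (ρ • θ) ∂(nuS n)) := by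
    exact Measurable.lintegral_prod_right' (f := fun p : ℝ × EuclideanSpace ℝ (Fin n) => f (p.1 • p.2)) (hf.comp (by fun_prop))
  have e3 : ∀ ρ : Ioi (0:ℝ), ∫⁻ θ : sphere (0 : EuclideanSpace ℝ (Fin n)) 1, f ((ρ : ℝ) • (θ : EuclideanSpace ℝ (Fin n))) ∂(volume.toSphere) = ∫⁻ θ, f ((ρ : ℝ) • θ) ∂(nuS n) := by
    intro ρ
    unfold nuS
    have h1 : Measurable (fun θ : EuclideanSpace ℝ (Fin n) => f ((ρ : ℝ) • θ)) := hf.comp (by fun_prop)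
    rw [lintegral_map h1 measurable_subtype_coe]
  simp only [e3]
  unfold Measure.volumeIoiPow
  have hm' : Measurable (fun ρ : Ioi (0:ℝ) => ∫⁻ θ, f ((ρ : ℝ) • θ) ∂(nuS n)) := hm.comp measurable_subtype_coe
  rw [lintegral_withDensity_eq_lintegral_mul _ (by fun_prop) hm']
  rw [← lintegral_subtype_comap measurableSet_Ioi]
  rfl

lemma nuS_compl (n : ℕ) : nuS n (sphere 0 1)ᶜ = 0 := by
  unfold nuS
  rw [Measure.map_apply measurable_subtype_coe (isClosed_sphere.measurableSet.compl)]
  have : (Subtype.val ⁻¹' (sphere (0 : EuclideanSpace ℝ (Fin n)) 1)ᶜ : Set (sphere (0 : EuclideanSpace ℝ (Fin n)) 1)) = ∅ := by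
    ext x; simp
  rw [this, measure_empty]

lemma nuS_ae (n : ℕ) : ∀ᵐ θ ∂(nuS n), ‖θ‖ = 1 := by
  rw [ae_iff]
  convert nuS_compl n using 2
  ext x; simp

lemma nrm_close {n : ℕ} {z v : EuclideanSpace ℝ (Fin n)} (hz : ‖z‖ = 1) (hv : v ≠ 0) :
    dist (‖v‖⁻¹ • v) z ≤ 2 * dist v z := by
  have h0 : 0 < ‖v‖ := norm_pos_iff.2 hv
  have h1 : dist (‖v‖⁻¹ • v) v ≤ dist v z := by
    have : ‖v‖⁻¹ • v - v = (‖v‖⁻¹ - 1) • v := by module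
    rw [dist_eq_norm, this, norm_smul, Real.norm_eq_abs, ← abs_of_pos h0, ← abs_mul, abs_of_pos h0, sub_mul,
      inv_mul_cancel₀ h0.ne', one_mul, ← hz, dist_comm, dist_eq_norm]
    exact abs_norm_sub_norm_le _ _
  linarith [dist_triangle (‖v‖⁻¹ • v) v z]

/-- two-sided bounds for sphere measure of balls -/
lemma nuS_upper {n : ℕ} (hn : 2 ≤ n) : ∃ K : ℝ, 0 < K ∧ ∀ z : EuclideanSpace ℝ (Fin n), ‖z‖ = 1 →
    ∀ r : ℝ, 0 < r → nuS n (closedBall z r) ≤ ENNReal.ofReal (K * r ^ (n - 1)) := by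
  have := nontriv hn
  set V := (volume (ball (0 : EuclideanSpace ℝ (Fin n)) 1)).toReal with hV
  have hV0 : 0 < V := ENNReal.toReal_pos (measure_ball_pos _ _ one_pos).ne' measure_ball_lt_top.ne
  refine ⟨V * 2 ^ n, by positivity, fun z hz r hr => ?_⟩
  -- the sector
  have key : ENNReal.ofReal r * nuS n (closedBall z r) ≤ volume (closedBall z (2 * r)) := by
    rw [← lintegral_indicator_one (μ := volume) measurableSet_closedBall, polar hn (measurable_one.indicator measurableSet_closedBall)]
    calc ENNReal.ofReal r * nuS n (closedBall z r)
        = ∫⁻ ρ in Ioo (1:ℝ) (1 + r), nuS n (closedBall z r) := by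
          rw [setLIntegral_const, Real.volume_Ioo, mul_comm]; congr 2; ring
      _ ≤ ∫⁻ ρ in Ioo (1:ℝ) (1 + r), ENNReal.ofReal (ρ ^ (n - 1)) *
            ∫⁻ θ, (closedBall z (2 * r)).indicator 1 (ρ • θ) ∂(nuS n) := by
          refine setLIntegral_mono' measurableSet_Ioo fun ρ hρ => ?_
          have a1 : (1 : ℝ≥0∞) ≤ ENNReal.ofReal (ρ ^ (n - 1)) := by
            rw [ENNReal.one_le_ofReal]; exact one_le_pow₀ hρ.1.le
          refine le_trans ?_ (mul_le_mul' a1 le_rfl)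
          rw [one_mul, ← lintegral_indicator_one measurableSet_closedBall]
          refine lintegral_mono_ae ?_
          filter_upwards [nuS_ae n] with θ hθ
          by_cases h : θ ∈ closedBall z r
          · have h2 : ρ • θ ∈ closedBall z (2 * r) := by
              have h3 : dist (ρ • θ) θ ≤ r := by
                have : ρ • θ - θ = (ρ - 1) • θ := by module
                rw [dist_eq_norm, this, norm_smul, hθ, mul_one, Real.norm_eq_abs, abs_of_pos (by linarith [hρ.1])]
                linarith [hρ.2]
              rw [mem_closedBall] at h ⊢
              linarith [dist_triangle (ρ • θ) θ z]
            simp only [indicator_of_mem h, indicator_of_mem h2, Pi.one_apply, le_refl]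
          · simp only [indicator_of_notMem h, zero_le]
      _ ≤ _ := lintegral_mono_set (fun ρ hρ => by have := hρ.1; simp; linarith)
  rw [Measure.addHaar_closedBall volume _ (by positivity)] at key
  have hfin : Module.finrank ℝ (EuclideanSpace ℝ (Fin n)) = n := by simp
  rw [hfin, ← ENNReal.ofReal_toReal (measure_ball_lt_top (μ := volume) (x := (0 : EuclideanSpace ℝ (Fin n))) (r := 1)).ne, ← hV,
    ← ENNReal.ofReal_mul (by positivity)] at key
  have hpow : (2 * r) ^ n * V = r * (V * 2 ^ n * r ^ (n - 1)) := by
    obtain ⟨m, rfl⟩ : ∃ m, n = m + 1 := ⟨n - 1, by omega⟩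
    simp; ring
  rw [hpow, ENNReal.ofReal_mul hr.le] at key
  exact (ENNReal.mul_le_mul_iff_right (by simpa using hr) ENNReal.ofReal_ne_top).1 key

lemma nuS_lower {n : ℕ} (hn : 2 ≤ n) : ∃ K : ℝ, 0 < K ∧ ∀ z : EuclideanSpace ℝ (Fin n), ‖z‖ = 1 →
    ∀ r : ℝ, 0 < r → r ≤ 1 → ENNReal.ofReal (K * r ^ (n - 1)) ≤ nuS n (closedBall z r) := by
  have := nontriv hn
  set V := (volume (ball (0 : EuclideanSpace ℝ (Fin n)) 1)).toReal with hV
  have hV0 : 0 < V := ENNReal.toReal_pos (measure_ball_pos _ _ one_pos).ne' measure_ball_lt_top.ne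
  refine ⟨V * (1 / 2) ^ n * (1 / 2) ^ (n - 1), by positivity, fun z hz r hr hr1 => ?_⟩
  -- the sector
  have key : volume (ball z (r / 2)) ≤ ENNReal.ofReal (r * 2 ^ (n - 1)) * nuS n (closedBall z r) := by
    rw [← lintegral_indicator_one (μ := volume) measurableSet_ball, polar hn (measurable_one.indicator measurableSet_ball)]
    calc _ ≤ ∫⁻ ρ in Ioi (0 : ℝ), (Ioo (1 - r / 2) (1 + r / 2)).indicator
            (fun _ => ENNReal.ofReal (2 ^ (n - 1)) * nuS n (closedBall z r)) ρ := by
          refine setLIntegral_mono' measurableSet_Ioi fun ρ hρ => ?_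
          have hρ0 : 0 < ρ := hρ
          have hin : ∀ θ : EuclideanSpace ℝ (Fin n), ‖θ‖ = 1 → ρ • θ ∈ ball z (r / 2) →
              ρ ∈ Ioo (1 - r / 2) (1 + r / 2) ∧ θ ∈ closedBall z r := by
            intro θ hθ h
            have hno : ‖ρ • θ‖ = ρ := by rw [norm_smul, hθ, mul_one, Real.norm_eq_abs, abs_of_pos hρ0]
            have h1 : |ρ - 1| < r / 2 := by
              rw [← hno, ← hz]
              exact lt_of_le_of_lt (abs_norm_sub_norm_le _ _) (by rwa [← dist_eq_norm])
            have h2 := nrm_close (v := ρ • θ) hz (by rw [← norm_pos_iff, hno]; exact hρ0)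
            rw [hno, smul_smul, inv_mul_cancel₀ hρ0.ne', one_smul] at h2
            rw [abs_lt] at h1
            refine ⟨⟨by linarith, by linarith⟩, ?_⟩
            rw [mem_ball] at h
            rw [mem_closedBall]; linarith
          by_cases hm : ρ ∈ Ioo (1 - r / 2) (1 + r / 2)
          · rw [indicator_of_mem hm]
            refine mul_le_mul' (ENNReal.ofReal_le_ofReal (pow_le_pow_left₀ hρ0.le (by linarith [hm.2]) _)) ?_
            rw [← lintegral_indicator_one measurableSet_closedBall]
            refine lintegral_mono_ae ?_
            filter_upwards [nuS_ae n] with θ hθ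
            by_cases h : ρ • θ ∈ ball z (r / 2)
            · simp only [indicator_of_mem h, indicator_of_mem (hin θ hθ h).2, Pi.one_apply, le_refl]
            · simp only [indicator_of_notMem h, zero_le]
          · rw [indicator_of_notMem hm]
            have : ∫⁻ θ, (ball z (r / 2)).indicator 1 (ρ • θ) ∂(nuS n) = ∫⁻ θ, (0 : ℝ≥0∞) ∂(nuS n) := by
              apply lintegral_congr_ae
              filter_upwards [nuS_ae n] with θ hθ
              exact indicator_of_notMem (fun h => hm (hin θ hθ h).1) _
            rw [this]; simp
      _ ≤ ∫⁻ ρ, (Ioo (1 - r / 2) (1 + r / 2)).indicator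
            (fun _ => ENNReal.ofReal (2 ^ (n - 1)) * nuS n (closedBall z r)) ρ := setLIntegral_le_lintegral _ _
      _ = _ := by
          rw [lintegral_indicator measurableSet_Ioo, setLIntegral_const, Real.volume_Ioo, ENNReal.ofReal_mul hr.le]
          rw [show 1 + r / 2 - (1 - r / 2) = r by ring]; ring
  rw [Measure.addHaar_ball volume _ (by positivity)] at key
  have hfin : Module.finrank ℝ (EuclideanSpace ℝ (Fin n)) = n := by simp
  rw [hfin, ← ENNReal.ofReal_toReal (measure_ball_lt_top (μ := volume) (x := (0 : EuclideanSpace ℝ (Fin n))) (r := 1)).ne, ← hV,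
    ← ENNReal.ofReal_mul (by positivity)] at key
  have hpow : (r / 2) ^ n * V = (r * 2 ^ (n - 1)) * (V * (1 / 2) ^ n * (1 / 2) ^ (n - 1) * r ^ (n - 1)) := by
    obtain ⟨m, rfl⟩ : ∃ m, n = m + 1 := ⟨n - 1, by omega⟩
    simp only [add_tsub_cancel_right]
    have : (2 : ℝ) ^ m * (1 / 2) ^ m = 1 := by rw [← mul_pow]; norm_num
    rw [div_pow, show r * 2 ^ m * (V * (1 / 2) ^ (m + 1) * (1 / 2) ^ m * r ^ m) = ((2 : ℝ) ^ m * (1 / 2) ^ m) * (r ^ (m+1) * V * (1 / 2) ^ (m + 1)) by ring, this, one_div, inv_pow]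
    ring
  rw [hpow, ENNReal.ofReal_mul (by positivity)] at key
  refine (ENNReal.mul_le_mul_iff_right ?_ ENNReal.ofReal_ne_top).1 key
  have : 0 < r * 2 ^ (n - 1) := by positivity
  simpa using this

end St16

namespace St16

lemma nuS_singleton {n : ℕ} (hn : 2 ≤ n) (z : EuclideanSpace ℝ (Fin n)) (hz : ‖z‖ = 1) :
    nuS n {z} = 0 := by
  obtain ⟨K, hK, h⟩ := nuS_upper hn
  have hlim : Tendsto (fun r : ℝ => ENNReal.ofReal (K * r ^ (n - 1))) (𝓝[>] 0) (𝓝 0) := by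
    have : Tendsto (fun r : ℝ => ENNReal.ofReal (K * r ^ (n - 1))) (𝓝 0) (𝓝 (ENNReal.ofReal (K * 0 ^ (n - 1)))) := by
      apply ENNReal.tendsto_ofReal
      exact Continuous.tendsto (by fun_prop) 0
    rw [zero_pow (by omega), mul_zero, ENNReal.ofReal_zero] at this
    exact this.mono_left nhdsWithin_le_nhds
  have := ge_of_tendsto hlim (b := nuS n {z}) (by
    filter_upwards [self_mem_nhdsWithin] with r hr
    exact (measure_mono (by simpa using (le_of_lt hr))).trans (h z hz r hr))
  simpa using this

lemma ediam_rpow_aux {n : ℕ} (hn : 2 ≤ n) (r : ℝ) (hr : 0 ≤ r) :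
    ENNReal.ofReal r ^ ((n : ℝ) - 1) = ENNReal.ofReal (r ^ (n - 1)) := by
  have : (n : ℝ) - 1 = ((n - 1 : ℕ) : ℝ) := by rw [Nat.cast_sub (by omega)]; simp
  rw [this, ENNReal.rpow_natCast, ENNReal.ofReal_pow hr]

lemma nuS_le_tauS {n : ℕ} (hn : 2 ≤ n) : ∃ K : ℝ≥0, 0 < K ∧ nuS n ≤ (K : ℝ≥0∞) • tauS n := by
  obtain ⟨K, hK, h⟩ := nuS_upper hn
  have hKn : 0 < Real.toNNReal K := by simpa using hK
  have h1 : ((Real.toNNReal K)⁻¹ : ℝ≥0) • nuS n ≤ (μH[(n : ℝ) - 1] : Measure (EuclideanSpace ℝ (Fin n))) := by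
    refine Measure.le_hausdorffMeasure _ _ 1 one_pos fun s hs => ?_
    by_cases hne : (s ∩ sphere 0 1).Nonempty
    · obtain ⟨z, hzs, hz⟩ := hne
      have hz1 : ‖z‖ = 1 := by simpa using hz
      have hfin : ediam s ≠ ∞ := (hs.trans_lt ENNReal.one_lt_top).ne
      have hsub : s ⊆ closedBall z (diam s) := fun y hy =>
        dist_le_diam_of_mem (isBounded_iff_ediam_ne_top.2 hfin) hy hzs
      have hd : ediam s = ENNReal.ofReal (diam s) := by
        rw [diam, ENNReal.ofReal_toReal hfin]
      rcases (diam_nonneg (s := s)).eq_or_lt with h0 | h0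
      · rw [← h0, closedBall_zero] at hsub
        have : ((Real.toNNReal K)⁻¹ • nuS n) s = 0 := by
          rw [Measure.smul_apply, measure_mono_null hsub (nuS_singleton hn z hz1)]; simp
        rw [this]; exact zero_le
      · rw [hd, ediam_rpow_aux hn _ h0.le, Measure.smul_apply]
        have := (measure_mono hsub).trans (h z hz1 _ h0)
        rw [ENNReal.smul_def, smul_eq_mul, ENNReal.coe_inv hKn.ne']
        rw [ENNReal.ofReal_mul hK.le] at this
        calc _ ≤ (↑K.toNNReal)⁻¹ * (ENNReal.ofReal K * ENNReal.ofReal (diam s ^ (n - 1))) := by gcongr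
          _ = _ := by
            rw [← mul_assoc]
            change (ENNReal.ofReal K)⁻¹ * ENNReal.ofReal K * _ = _
            rw [ENNReal.inv_mul_cancel (by simpa using hK) ENNReal.ofReal_ne_top, one_mul]
    · have : ((Real.toNNReal K)⁻¹ • nuS n) s = 0 := by
        rw [Measure.smul_apply, measure_mono_null (t := (sphere 0 1)ᶜ) ?_ (nuS_compl n)]
        · simp
        · intro y hy hy2
          exact hne ⟨y, hy, hy2⟩
      rw [this]; exact zero_le
  refine ⟨Real.toNNReal K, hKn, Measure.le_iff.2 fun s hs => ?_⟩
  have h2 := h1 (s ∩ sphere 0 1)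
  rw [Measure.smul_apply, measure_inter_conull' (measure_mono_null (fun x hx => hx.2) (nuS_compl n))] at h2
  rw [Measure.smul_apply, tauS, Measure.restrict_apply hs, smul_eq_mul]
  calc nuS n s = (K.toNNReal : ℝ≥0∞) * ((Real.toNNReal K)⁻¹ • nuS n s) := by
        rw [ENNReal.smul_def, smul_eq_mul, ENNReal.coe_inv hKn.ne', ← mul_assoc, ENNReal.mul_inv_cancel (by simpa using hK) (by simp), one_mul]
    _ ≤ _ := by gcongr

lemma tauS_upper {n : ℕ} (hn : 2 ≤ n) : ∃ K : ℝ, 0 < K ∧ ∀ z : EuclideanSpace ℝ (Fin n), ‖z‖ = 1 →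
    ∀ r : ℝ, 0 < r → tauS n (closedBall z r) ≤ ENNReal.ofReal (K * r ^ (n - 1)) := by
  obtain ⟨K, hK, h⟩ := nuS_upper hn
  obtain ⟨k, hk, h'⟩ := nuS_lower hn
  refine ⟨10 ^ (n - 1) / k * (K * 2 ^ (n - 1)), by positivity, fun z hz r hr => ?_⟩
  rw [tauS, Measure.restrict_apply measurableSet_closedBall]
  set A := closedBall z r ∩ sphere 0 1 with hA
  have hcov : ∀ ε : ℝ, ∃ u ⊆ A, (u.PairwiseDisjoint fun a => closedBall a ε) ∧
        ∀ a ∈ A, ∃ b ∈ u, closedBall a ε ⊆ closedBall b (5 * ε) := by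
    intro ε
    exact Vitali.exists_disjoint_subfamily_covering_enlargement_closedBall A id (fun _ => ε) ε (fun _ _ => le_rfl) 5 (by norm_num)
  choose U hUA hUd hUc using hcov
  have hcount : ∀ ε : ℝ, 0 < ε → (U ε).Countable := fun ε hε =>
    (hUd ε).countable_of_nonempty_interior fun i _ => ⟨i, ball_subset_interior_closedBall (mem_ball_self hε)⟩
  have hm0 : 0 < min 1 r := lt_min one_pos hr
  let e : ℕ → ℝ := fun j => min 1 r * (1 / ((j : ℝ) + 1))
  have he : ∀ j, 0 < e j := fun j => by positivity
  have he1 : ∀ j, e j ≤ min 1 r := fun j => by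
    refine mul_le_of_le_one_right hm0.le ?_
    rw [div_le_one (by positivity)]
    have : (0:ℝ) ≤ j := j.cast_nonneg
    linarith
  have hetend : Tendsto e atTop (𝓝 0) := by
    simpa [e] using (tendsto_one_div_add_atTop_nhds_zero_nat (𝕜 := ℝ)).const_mul (min 1 r)
  have : ∀ j, Countable (U (e j)) := fun j => (hcount _ (he j)).to_subtype
  have hdiam : ∀ (x : EuclideanSpace ℝ (Fin n)) (s : ℝ), ediam (closedBall x s) ≤ ENNReal.ofReal (2 * s) := by
    intro x s
    refine ediam_le fun a ha b hb => ?_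
    rw [edist_dist]
    apply ENNReal.ofReal_le_ofReal
    linarith [dist_triangle_right a b x, mem_closedBall.1 ha, mem_closedBall.1 hb]
  have hmain := Measure.hausdorffMeasure_le_liminf_tsum ((n : ℝ) - 1) A (l := atTop)
    (fun j => ENNReal.ofReal (10 * e j)) (by
      have : Tendsto (fun j => 10 * e j) atTop (𝓝 0) := by simpa using hetend.const_mul 10
      simpa using ENNReal.tendsto_ofReal this)
    (fun j (i : U (e j)) => closedBall (i : EuclideanSpace ℝ (Fin n)) (5 * e j))
    (Eventually.of_forall fun j i => by
      refine (hdiam _ _).trans (le_of_eq ?_)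
      congr 1; ring)
    (Eventually.of_forall fun j a ha => by
      obtain ⟨b, hb, hsub⟩ := hUc (e j) a ha
      exact mem_iUnion.2 ⟨⟨b, hb⟩, hsub (mem_closedBall_self (he j).le)⟩)
  refine hmain.trans ?_
  refine liminf_le_of_frequently_le' (Frequently.of_forall fun j => ?_)
  calc ∑' i : U (e j), ediam (closedBall (i : EuclideanSpace ℝ (Fin n)) (5 * e j)) ^ ((n : ℝ) - 1)
      ≤ ∑' i : U (e j), ENNReal.ofReal (10 ^ (n - 1) / k) * nuS n (closedBall (i : EuclideanSpace ℝ (Fin n)) (e j)) := by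
        refine ENNReal.tsum_le_tsum fun i => ?_
        have hi1 : ‖(i : EuclideanSpace ℝ (Fin n))‖ = 1 := by simpa using (hUA _ i.2).2
        calc _ ≤ ENNReal.ofReal (2 * (5 * e j)) ^ ((n : ℝ) - 1) := by
              refine ENNReal.rpow_le_rpow (hdiam _ _) ?_
              have : (2 : ℝ) ≤ n := by exact_mod_cast hn
              linarith
          _ = ENNReal.ofReal (10 ^ (n - 1) / k) * ENNReal.ofReal (k * (e j) ^ (n - 1)) := by
              have := he j
              rw [ediam_rpow_aux hn _ (by positivity), ← ENNReal.ofReal_mul (by positivity)]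
              congr 1
              rw [show 2 * (5 * e j) = 10 * e j by ring, mul_pow]
              field_simp
          _ ≤ _ := by
              gcongr
              exact h' _ hi1 _ (he j) ((he1 j).trans (min_le_left _ _))
    _ = ENNReal.ofReal (10 ^ (n - 1) / k) * nuS n (⋃ i ∈ U (e j), closedBall (i : EuclideanSpace ℝ (Fin n)) (e j)) := by
        rw [ENNReal.tsum_mul_left, measure_biUnion (hcount _ (he j)) (hUd (e j)) (fun _ _ => measurableSet_closedBall)]
    _ ≤ ENNReal.ofReal (10 ^ (n - 1) / k) * nuS n (closedBall z (2 * r)) := by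
        gcongr
        refine iUnion₂_subset fun i hi => closedBall_subset_closedBall' ?_
        have h1 : dist i z ≤ r := (hUA _ hi).1
        linarith [he1 j, min_le_right 1 r]
    _ ≤ ENNReal.ofReal (10 ^ (n - 1) / k) * ENNReal.ofReal (K * (2 * r) ^ (n - 1)) := by
        gcongr
        exact h z hz _ (by positivity)
    _ = _ := by
        rw [← ENNReal.ofReal_mul (by positivity), mul_pow]; congr 1; ring

instance tauS_fin {n : ℕ} [hn : Fact (2 ≤ n)] : IsFiniteMeasure (tauS n) := by
  obtain ⟨K, hK, h⟩ := tauS_upper hn.out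
  obtain ⟨z, hz⟩ : ∃ z : EuclideanSpace ℝ (Fin n), ‖z‖ = 1 := by
    have := nontriv hn.out
    exact exists_norm_eq _ zero_le_one
  have h1 : tauS n univ ≤ tauS n (closedBall z 2) := by
    unfold tauS
    rw [Measure.restrict_apply_univ, Measure.restrict_apply measurableSet_closedBall]
    refine measure_mono fun x hx => ⟨?_, hx⟩
    rw [mem_closedBall, dist_eq_norm]
    have : ‖x‖ = 1 := by simpa using hx
    linarith [norm_sub_le x z]
  exact ⟨(h1.trans (h z hz 2 two_pos)).trans_lt ENNReal.ofReal_lt_top⟩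

lemma tauS_ae (n : ℕ) : ∀ᵐ θ ∂(tauS n), ‖θ‖ = 1 := by
  filter_upwards [ae_restrict_mem (isClosed_sphere.measurableSet)] with x hx
  simpa using hx

lemma tauS_lower {n : ℕ} (hn : 2 ≤ n) : ∃ K : ℝ, 0 < K ∧ ∀ z : EuclideanSpace ℝ (Fin n), ‖z‖ = 1 →
    ∀ r : ℝ, 0 < r → r ≤ 1 → ENNReal.ofReal (K * r ^ (n - 1)) ≤ tauS n (closedBall z r) := by
  obtain ⟨k, hk, h⟩ := nuS_lower hn
  obtain ⟨C, hC, h'⟩ := nuS_le_tauS hn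
  have hC' : (0 : ℝ) < C := hC
  refine ⟨k / C, by positivity, fun z hz r hr hr1 => ?_⟩
  have h1 := (h z hz r hr hr1).trans (h' (closedBall z r))
  rw [Measure.smul_apply, smul_eq_mul, show k * r ^ (n - 1) = C * (k / C * r ^ (n - 1)) by field_simp,
    ENNReal.ofReal_mul hC'.le, ENNReal.ofReal_coe_nnreal] at h1
  exact (ENNReal.mul_le_mul_iff_right (by simpa using hC.ne') ENNReal.coe_ne_top).1 h1

end St16

namespace St16

lemma dyadic {n : ℕ} (hn : 2 ≤ n) (m : Measure (EuclideanSpace ℝ (Fin n))) (z : EuclideanSpace ℝ (Fin n)) (K : ℝ≥0∞)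
    (h : ∀ r : ℝ, 0 < r → m (closedBall z r) ≤ K * ENNReal.ofReal (r ^ (n - 1))) (δ : ℝ) (hδ : 0 < δ) :
    ∫⁻ v, ENNReal.ofReal ((δ + dist v z) ^ n)⁻¹ ∂m ≤ K * ENNReal.ofReal (2 ^ n / δ) := by
  let T : ℕ → EuclideanSpace ℝ (Fin n) → ℝ≥0∞ := fun j v =>
    ENNReal.ofReal ((2 ^ j * δ) ^ n)⁻¹ * (closedBall z (2 ^ (j + 1) * δ)).indicator 1 v
  have hT : ∀ j, Measurable (T j) := fun j =>
    (measurable_one.indicator measurableSet_closedBall).const_mul _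
  have h1 : ∀ v, ENNReal.ofReal ((δ + dist v z) ^ n)⁻¹ ≤ ∑' j, T j v := by
    intro v
    have : ∃ j : ℕ, 2 ^ j * δ ≤ δ + dist v z ∧ dist v z ≤ 2 ^ (j + 1) * δ := by
      by_cases hd : dist v z < δ
      · exact ⟨0, by simp, by simp; linarith⟩
      · push Not at hd
        obtain ⟨j, hj1, hj2⟩ := exists_nat_pow_near (x := dist v z / δ) (y := 2) (by rwa [one_le_div hδ]) (by norm_num)
        rw [le_div_iff₀ hδ] at hj1
        rw [div_lt_iff₀ hδ] at hj2
        exact ⟨j, by linarith, hj2.le⟩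
    obtain ⟨j, hj1, hj2⟩ := this
    refine le_trans ?_ (ENNReal.le_tsum j)
    simp only [T]
    rw [indicator_of_mem (mem_closedBall.2 hj2), Pi.one_apply, mul_one]
    apply ENNReal.ofReal_le_ofReal
    gcongr
  calc _ ≤ ∫⁻ v, ∑' j, T j v ∂m := lintegral_mono h1
    _ = ∑' j, ∫⁻ v, T j v ∂m := lintegral_tsum fun j => (hT j).aemeasurable
    _ ≤ ∑' j : ℕ, K * ENNReal.ofReal (2 ^ (n - 1) / δ * (1 / 2) ^ j) := by
        refine ENNReal.tsum_le_tsum fun j => ?_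
        simp only [T]
        rw [lintegral_const_mul _ (measurable_one.indicator measurableSet_closedBall), lintegral_indicator_one measurableSet_closedBall]
        calc _ ≤ ENNReal.ofReal ((2 ^ j * δ) ^ n)⁻¹ * (K * ENNReal.ofReal ((2 ^ (j + 1) * δ) ^ (n - 1))) := by
              gcongr; exact h _ (by positivity)
          _ = _ := by
              rw [mul_left_comm, ← ENNReal.ofReal_mul (by positivity)]
              congr 2
              obtain ⟨p, rfl⟩ : ∃ p, n = p + 1 := ⟨n - 1, by omega⟩
              simp only [add_tsub_cancel_right]
              rw [show (2 ^ (j + 1) * δ) ^ p = 2 ^ p * (2 ^ j * δ) ^ p by rw [← mul_pow]; ring, pow_succ (2 ^ j * δ), one_div, inv_pow]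
              field_simp
    _ = _ := by
        rw [ENNReal.tsum_mul_left, ← ENNReal.ofReal_tsum_of_nonneg (fun j => by positivity) (summable_geometric_two.mul_left _), tsum_mul_left, tsum_geometric_two]
        congr 2
        obtain ⟨p, rfl⟩ : ∃ p, n = p + 1 := ⟨n - 1, by omega⟩
        simp; ring

lemma dens_zero {n : ℕ} (hn : 2 ≤ n) (m : Measure (EuclideanSpace ℝ (Fin n))) (z : EuclideanSpace ℝ (Fin n))
    (h1 : ∫⁻ v, ENNReal.ofReal ((1 + dist v z) ^ n)⁻¹ ∂m ≠ ∞)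
    (h2 : ∀ ε : ℝ, 0 < ε → ∀ᶠ r in 𝓝[>] (0:ℝ), m (closedBall z r) ≤ ENNReal.ofReal (ε * r ^ (n - 1))) :
    Tendsto (fun δ : ℝ => ENNReal.ofReal δ * ∫⁻ v, ENNReal.ofReal ((δ + dist v z) ^ n)⁻¹ ∂m) (𝓝[>] 0) (𝓝 0) := by
  rw [ENNReal.tendsto_nhds_zero]
  intro η hη
  by_cases hηt : η = ∞
  · simp [hηt]
  lift η to ℝ≥0 using hηt
  have hη' : (0 : ℝ) < η := by exact_mod_cast hη
  set ε : ℝ := η / 2 / 2 ^ n with hε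
  have hε0 : 0 < ε := by positivity
  obtain ⟨r0, hr0, hr⟩ : ∃ r0 : ℝ, 0 < r0 ∧ ∀ r, 0 < r → r < r0 → m (closedBall z r) ≤ ENNReal.ofReal (ε * r ^ (n - 1)) := by
    have := h2 ε hε0
    rw [eventually_nhdsWithin_iff, Metric.eventually_nhds_iff] at this
    obtain ⟨r0, hr0, h⟩ := this
    exact ⟨r0, hr0, fun r hr hr' => h (by rwa [Real.dist_eq, sub_zero, abs_of_pos hr]) hr⟩
  set s := min (r0 / 2) 1 with hs
  have hs0 : 0 < s := by positivity
  have hs1 : s ≤ 1 := min_le_right _ _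
  have hsr : s < r0 := (min_le_left _ _).trans_lt (by linarith)
  set I := ∫⁻ v, ENNReal.ofReal ((1 + dist v z) ^ n)⁻¹ ∂m with hI
  have hnear : ∀ δ : ℝ, 0 < δ → ENNReal.ofReal δ * ∫⁻ v in closedBall z s, ENNReal.ofReal ((δ + dist v z) ^ n)⁻¹ ∂m ≤ η / 2 := by
    intro δ hδ
    have := dyadic hn (m.restrict (closedBall z s)) z (ENNReal.ofReal ε) (fun r hr' => by
      rw [Measure.restrict_apply measurableSet_closedBall, ← ENNReal.ofReal_mul hε0.le]
      by_cases hrr : r < r0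
      · exact (measure_mono inter_subset_left).trans (hr r hr' hrr)
      · push Not at hrr
        refine ((measure_mono inter_subset_right).trans (hr s hs0 hsr)).trans ?_
        apply ENNReal.ofReal_le_ofReal
        have : s ≤ r := by linarith
        gcongr) δ hδ
    calc _ ≤ ENNReal.ofReal δ * (ENNReal.ofReal ε * ENNReal.ofReal (2 ^ n / δ)) := by gcongr
      _ = ENNReal.ofReal (η / 2) := by
        rw [← ENNReal.ofReal_mul hε0.le, ← ENNReal.ofReal_mul hδ.le, hε]
        congr 1; field_simp
      _ = _ := by
        rw [ENNReal.ofReal_div_of_pos two_pos]; simp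
  have hfar : ∀ δ : ℝ, 0 < δ → ENNReal.ofReal δ * ∫⁻ v in (closedBall z s)ᶜ, ENNReal.ofReal ((δ + dist v z) ^ n)⁻¹ ∂m ≤ 
      ENNReal.ofReal δ * (ENNReal.ofReal ((2 / s) ^ n) * I) := by
    intro δ hδ
    gcongr
    rw [hI, ← lintegral_const_mul _ (by fun_prop)]
    refine (setLIntegral_mono' measurableSet_closedBall.compl fun v hv => ?_).trans (setLIntegral_le_lintegral _ _)
    have hv' : s < dist v z := by simpa using hv
    rw [← ENNReal.ofReal_mul (by positivity)]
    apply ENNReal.ofReal_le_ofReal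
    rw [← inv_pow, ← inv_pow, ← mul_pow]
    gcongr
    rw [inv_le_iff_one_le_mul₀ (by positivity), div_mul_eq_mul_div, div_mul_eq_mul_div, one_le_div hs0,
      mul_assoc, inv_mul_eq_div, ← mul_div_assoc, le_div_iff₀ (by positivity)]
    nlinarith
  have hlim : Tendsto (fun δ : ℝ => ENNReal.ofReal δ * (ENNReal.ofReal ((2 / s) ^ n) * I)) (𝓝[>] 0) (𝓝 0) := by
    have : Tendsto (fun δ : ℝ => ENNReal.ofReal δ) (𝓝[>] 0) (𝓝 0) := by
      have := (ENNReal.continuous_ofReal.tendsto 0).mono_left (nhdsWithin_le_nhds (s := Ioi (0:ℝ)))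
      simpa using this
    have h3 := ENNReal.Tendsto.mul_const (b := (ENNReal.ofReal ((2 / s) ^ n) * I)) this (Or.inr (ENNReal.mul_ne_top ENNReal.ofReal_ne_top h1))
    simpa using h3
  have hη2 : (0 : ℝ≥0∞) < η / 2 := ENNReal.half_pos hη.ne'
  filter_upwards [(ENNReal.tendsto_nhds_zero.1 hlim) _ hη2, self_mem_nhdsWithin] with δ hd hδ
  rw [← lintegral_add_compl _ (measurableSet_closedBall (x := z) (ε := s)), mul_add, ← ENNReal.add_halves (η : ℝ≥0∞)]
  exact add_le_add (hnear δ hδ) ((hfar δ hδ).trans hd)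

end St16

namespace St16

noncomputable def wt (a r ρ : ℝ) : ℝ := (ρ - r) ^ (-a) * (1 - ρ) ^ (a - 1)

lemma wt_meas (a r : ℝ) : Measurable (wt a r) := by
  unfold wt; fun_prop

def ann (n : ℕ) (r : ℝ) : Set (EuclideanSpace ℝ (Fin n)) := {v | r < ‖v‖ ∧ ‖v‖ < 1}

lemma ann_meas (n : ℕ) (r : ℝ) : MeasurableSet (ann n r) :=
  (measurableSet_lt measurable_const measurable_norm).inter (measurableSet_lt measurable_norm measurable_const)

lemma lint_rpow (b : ℝ) (hb : -1 < b) (L : ℝ) (hL : 0 < L) :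
    ∫⁻ ρ in Ioo 0 L, ENNReal.ofReal (ρ ^ b) = ENNReal.ofReal (L ^ (b + 1) / (b + 1)) := by
  rw [Measure.restrict_congr_set Ioo_ae_eq_Ioc, ← ofReal_integral_eq_lintegral_ofReal, ← intervalIntegral.integral_of_le hL.le,
    integral_rpow (Or.inl hb), Real.zero_rpow (by linarith), sub_zero]
  · exact (intervalIntegral.intervalIntegrable_rpow' hb).1
  · filter_upwards [ae_restrict_mem measurableSet_Ioc] with x hx
    exact Real.rpow_nonneg hx.1.le _

lemma beta_bound (a : ℝ) (ha : a ∈ Ioo (0:ℝ) 1) : ∃ K : ℝ, 0 < K ∧ ∀ r : ℝ, r < 1 →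
    ∫⁻ ρ in Ioo r 1, ENNReal.ofReal (wt a r ρ) ≤ ENNReal.ofReal K := by
  obtain ⟨ha0, ha1⟩ := ha
  have h1a : 0 < 1 - a := by linarith
  refine ⟨2 ^ (1 - a) / (1 - a) + 2 ^ a / a, by positivity, fun r hr => ?_⟩
  set d := (1 - r) / 2 with hd
  have hd0 : 0 < d := by rw [hd]; linarith
  have e1 : ∫⁻ ρ in Ioo r 1, ENNReal.ofReal ((ρ - r) ^ (-a)) = ENNReal.ofReal ((2 * d) ^ (1 - a) / (1 - a)) := by
    have := (measurePreserving_sub_right volume r).setLIntegral_comp_preimage_emb (MeasurableEquiv.subRight r).measurableEmbedding (fun ρ => ENNReal.ofReal (ρ ^ (-a))) (Ioo 0 (2 * d))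
    rw [lint_rpow (-a) (by linarith) (2 * d) (by positivity)] at this
    rw [show 1 - a = -a + 1 by ring, ← this]
    congr 2
    ext x; simp [hd]; intro; constructor <;> intro <;> linarith
  have e2 : ∫⁻ ρ in Ioo r 1, ENNReal.ofReal ((1 - ρ) ^ (a - 1)) = ENNReal.ofReal ((2 * d) ^ a / a) := by
    have := (Measure.measurePreserving_sub_left volume (1:ℝ)).setLIntegral_comp_preimage_emb (MeasurableEquiv.subLeft (1:ℝ)).measurableEmbedding (fun ρ => ENNReal.ofReal (ρ ^ (a - 1))) (Ioo 0 (2 * d))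
    rw [lint_rpow (a - 1) (by linarith) (2 * d) (by positivity), sub_add_cancel] at this
    rw [← this]
    congr 2
    ext x; simp [hd]; intro; constructor <;> intro <;> linarith
  have hpt : ∀ ρ ∈ Ioo r 1, ENNReal.ofReal (wt a r ρ) ≤
      ENNReal.ofReal (d ^ (a - 1)) * ENNReal.ofReal ((ρ - r) ^ (-a)) + ENNReal.ofReal (d ^ (-a)) * ENNReal.ofReal ((1 - ρ) ^ (a - 1)) := by
    intro ρ hρ
    have hA : 0 < ρ - r := by linarith [hρ.1]
    have hB : 0 < 1 - ρ := by linarith [hρ.2]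
    rw [← ENNReal.ofReal_mul (by positivity), ← ENNReal.ofReal_mul (by positivity), ← ENNReal.ofReal_add (by positivity) (by positivity)]
    apply ENNReal.ofReal_le_ofReal
    unfold wt
    by_cases hc : d ≤ 1 - ρ
    · have : (1 - ρ) ^ (a - 1) ≤ d ^ (a - 1) := Real.rpow_le_rpow_of_nonpos hd0 hc (by linarith)
      have h2 : 0 ≤ d ^ (-a) * (1 - ρ) ^ (a - 1) := by positivity
      have h3 : 0 ≤ (ρ - r) ^ (-a) := by positivity
      nlinarith
    · have hc' : d ≤ ρ - r := by rw [hd] at hc ⊢; linarith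
      have : (ρ - r) ^ (-a) ≤ d ^ (-a) := Real.rpow_le_rpow_of_nonpos hd0 hc' (by linarith)
      have h2 : 0 ≤ d ^ (a - 1) * (ρ - r) ^ (-a) := by positivity
      have h3 : 0 ≤ (1 - ρ) ^ (a - 1) := by positivity
      nlinarith
  refine (setLIntegral_mono' measurableSet_Ioo hpt).trans ?_
  rw [lintegral_add_left (by fun_prop), lintegral_const_mul _ (by fun_prop), lintegral_const_mul _ (by fun_prop), e1, e2,
    ← ENNReal.ofReal_mul (by positivity), ← ENNReal.ofReal_mul (by positivity), ← ENNReal.ofReal_add (by positivity) (by positivity)]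
  apply ENNReal.ofReal_le_ofReal
  rw [Real.mul_rpow (by norm_num) hd0.le, Real.mul_rpow (by norm_num) hd0.le]
  have h5 : d ^ (a - 1) * d ^ (1 - a) = 1 := by rw [← Real.rpow_add hd0]; simp
  have h6 : d ^ (-a) * d ^ a = 1 := by rw [← Real.rpow_add hd0]; simp
  apply le_of_eq
  calc _ = (d ^ (a - 1) * d ^ (1 - a)) * (2 ^ (1 - a) / (1 - a)) + (d ^ (-a) * d ^ a) * (2 ^ a / a) := by ring
    _ = _ := by rw [h5, h6]; ring

lemma ann_bound {n : ℕ} (hn : 2 ≤ n) (a : ℝ) (K : ℝ) 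
    (hK : ∀ r : ℝ, r < 1 → ∫⁻ ρ in Ioo r 1, ENNReal.ofReal (wt a r ρ) ≤ ENNReal.ofReal K)
    (F : ℝ → EuclideanSpace ℝ (Fin n) → ℝ≥0∞) (hF : Measurable (Function.uncurry F)) (A : ℝ≥0∞)
    (hA : ∀ ρ ∈ Ioo (0:ℝ) 1, ∫⁻ θ, F ρ θ ∂(nuS n) ≤ A) (r : ℝ) (hr0 : 0 ≤ r) (hr : r < 1) :
    ∫⁻ v in ann n r, ENNReal.ofReal (wt a r ‖v‖) * F ‖v‖ (‖v‖⁻¹ • v) ≤ ENNReal.ofReal K * A := by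
  have hFm : Measurable (fun v : EuclideanSpace ℝ (Fin n) => F ‖v‖ (‖v‖⁻¹ • v)) :=
    hF.comp (by fun_prop : Measurable fun v : EuclideanSpace ℝ (Fin n) => (‖v‖, ‖v‖⁻¹ • v))
  have hw := wt_meas a r
  rw [← lintegral_indicator (ann_meas n r), polar hn (Measurable.indicator (by fun_prop) (ann_meas n r))]
  calc _ ≤ ∫⁻ ρ in Ioi (0:ℝ), (Ioo r 1).indicator (fun ρ => ENNReal.ofReal (wt a r ρ) * A) ρ := by
        refine setLIntegral_mono' measurableSet_Ioi fun ρ hρ => ?_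
        have hρ0 : 0 < ρ := hρ
        have hno : ∀ θ : EuclideanSpace ℝ (Fin n), ‖θ‖ = 1 → ‖ρ • θ‖ = ρ := fun θ hθ => by
          rw [norm_smul, hθ, mul_one, Real.norm_eq_abs, abs_of_pos hρ0]
        by_cases hm : ρ ∈ Ioo r 1
        · rw [indicator_of_mem hm]
          have e : ∫⁻ θ, (ann n r).indicator (fun v => ENNReal.ofReal (wt a r ‖v‖) * F ‖v‖ (‖v‖⁻¹ • v)) (ρ • θ) ∂(nuS n)
              = ∫⁻ θ, ENNReal.ofReal (wt a r ρ) * F ρ θ ∂(nuS n) := by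
            apply lintegral_congr_ae
            filter_upwards [nuS_ae n] with θ hθ
            rw [indicator_of_mem (show ρ • θ ∈ ann n r by simp only [ann, mem_ofPred_eq, hno θ hθ]; exact hm), hno θ hθ, smul_smul, inv_mul_cancel₀ hρ0.ne', one_smul]
          have hFρ : Measurable (F ρ) := hF.comp (measurable_const.prodMk measurable_id)
          rw [e, lintegral_const_mul _ hFρ]
          calc _ ≤ 1 * (ENNReal.ofReal (wt a r ρ) * A) := by
                gcongr
                · rw [ENNReal.ofReal_le_one]; exact pow_le_one₀ hρ0.le hm.2.le
                · exact hA ρ ⟨hρ0, hm.2⟩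
            _ = _ := one_mul _
        · rw [indicator_of_notMem hm]
          have e : ∫⁻ θ, (ann n r).indicator (fun v => ENNReal.ofReal (wt a r ‖v‖) * F ‖v‖ (‖v‖⁻¹ • v)) (ρ • θ) ∂(nuS n)
              = ∫⁻ θ, 0 ∂(nuS n) := by
            apply lintegral_congr_ae
            filter_upwards [nuS_ae n] with θ hθ
            exact indicator_of_notMem (fun h => hm (by simp only [ann, mem_ofPred_eq, hno θ hθ] at h; exact h)) _
          rw [e]; simp
    _ ≤ ∫⁻ ρ, (Ioo r 1).indicator (fun ρ => ENNReal.ofReal (wt a r ρ) * A) ρ := setLIntegral_le_lintegral _ _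
    _ = (∫⁻ ρ in Ioo r 1, ENNReal.ofReal (wt a r ρ)) * A := by
        rw [lintegral_indicator measurableSet_Ioo, lintegral_mul_const _ (by fun_prop)]
    _ ≤ _ := by gcongr; exact hK r hr

/-- bound on the pushforward -/
lemma ann_int_bound {n : ℕ} (hn : 2 ≤ n) (a : ℝ) (ha : a ∈ Ioo (0:ℝ) 1) : ∃ C : ℝ, 0 < C ∧ ∀ w : EuclideanSpace ℝ (Fin n), 1 < ‖w‖ →
    ∀ r : ℝ, 0 ≤ r → r < 1 → 
    ∫⁻ v in ann n r, ENNReal.ofReal (wt a r ‖v‖ * (1 - ‖v‖) * (dist v w ^ n)⁻¹) ≤ ENNReal.ofReal (C * (‖w‖ ^ n)⁻¹) := by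
  obtain ⟨K, hK, hKb⟩ := beta_bound a ha
  obtain ⟨N, hN, hNb⟩ := nuS_upper hn
  refine ⟨18 ^ n * K * (N * 2 ^ n), by positivity, fun w hw r hr0 hr1 => ?_⟩
  set z := ‖w‖⁻¹ • w with hz
  have hw0 : 0 < ‖w‖ := by linarith
  have hz1 : ‖z‖ = 1 := by rw [hz, norm_smul, norm_inv, norm_norm, inv_mul_cancel₀ hw0.ne']
  let F : ℝ → EuclideanSpace ℝ (Fin n) → ℝ≥0∞ := fun ρ θ => ENNReal.ofReal ((1 - ρ) * ((1 - ρ + dist θ z) ^ n)⁻¹)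
  have hF : Measurable (Function.uncurry F) := by
    simp only [F, Function.uncurry_def]; fun_prop
  have hb := ann_bound hn a K hKb F hF (ENNReal.ofReal (N * 2 ^ n)) (fun ρ hρ => by
    have hρ1 : 0 < 1 - ρ := by linarith [hρ.2]
    have hd := dyadic hn (nuS n) z (ENNReal.ofReal N) (fun r hr => by rw [← ENNReal.ofReal_mul hN.le]; exact hNb z hz1 r hr) (1 - ρ) hρ1
    simp only [F]
    simp_rw [ENNReal.ofReal_mul hρ1.le]
    rw [lintegral_const_mul _ (by fun_prop)]
    refine (mul_le_mul' le_rfl hd).trans (le_of_eq ?_)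
    rw [← ENNReal.ofReal_mul hN.le, ← ENNReal.ofReal_mul hρ1.le]
    congr 1; field_simp) r hr0 hr1
  calc _ ≤ ∫⁻ v in ann n r, ENNReal.ofReal (18 ^ n * (‖w‖ ^ n)⁻¹) * (ENNReal.ofReal (wt a r ‖v‖) * F ‖v‖ (‖v‖⁻¹ • v)) := by
        refine setLIntegral_mono' (ann_meas n r) fun v hv => ?_
        obtain ⟨hv1, hv2⟩ := hv
        have hv0 : 0 < ‖v‖ := by linarith
        have hwt : 0 ≤ wt a r ‖v‖ := mul_nonneg (Real.rpow_nonneg (by linarith) _) (Real.rpow_nonneg (by linarith) _)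
        have h1v : 0 < 1 - ‖v‖ := by linarith
        have hwv : ‖w‖ - ‖v‖ ≤ dist v w := by rw [dist_comm, dist_eq_norm]; exact norm_sub_norm_le _ _
        simp only [F]
        rw [← ENNReal.ofReal_mul hwt, ← ENNReal.ofReal_mul (by positivity)]
        apply ENNReal.ofReal_le_ofReal
        set θ := ‖v‖⁻¹ • v with hθ
        have d1 : dist θ v = 1 - ‖v‖ := by
          have : θ - v = (1 - ‖v‖) • θ := by rw [sub_smul, one_smul, hθ, smul_smul, mul_inv_cancel₀ hv0.ne', one_smul]
          rw [dist_eq_norm, this, norm_smul, hθ, norm_smul, norm_inv, norm_norm, inv_mul_cancel₀ hv0.ne', mul_one, Real.norm_eq_abs, abs_of_pos h1v]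
        have d2 : dist w z = ‖w‖ - 1 := by
          have : w - z = (‖w‖ - 1) • z := by rw [sub_smul, one_smul, hz, smul_smul, mul_inv_cancel₀ hw0.ne', one_smul]
          rw [dist_eq_norm, this, norm_smul, hz1, mul_one, Real.norm_eq_abs, abs_of_pos (by linarith)]
        have d3 : dist θ z ≤ 2 * dist v w := by
          have := dist_triangle4 θ v w z
          linarith
        have hθ1 : ‖θ‖ = 1 := by rw [hθ, norm_smul, norm_inv, norm_norm, inv_mul_cancel₀ hv0.ne']
        have d4 : dist θ z ≤ 2 := by rw [dist_eq_norm]; linarith [norm_sub_le θ z]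
        have hdz := dist_nonneg (x := θ) (y := z)
        have hX : ‖w‖ * (1 - ‖v‖ + dist θ z) ≤ 18 * dist v w := by
          by_cases h2 : ‖w‖ ≤ 2
          · nlinarith
          · push Not at h2
            nlinarith
        have hfin : (dist v w ^ n)⁻¹ ≤ 18 ^ n * (‖w‖ ^ n)⁻¹ * ((1 - ‖v‖ + dist θ z) ^ n)⁻¹ := by
          rw [← inv_pow, ← inv_pow, ← inv_pow, ← mul_pow, ← mul_pow]
          have hdvw : 0 < dist v w := by linarith
          gcongr
          rw [← div_eq_mul_inv, ← div_eq_mul_inv, div_div, le_div_iff₀ (by positivity), inv_mul_eq_div, div_le_iff₀ hdvw]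
          exact hX
        calc _ ≤ wt a r ‖v‖ * (1 - ‖v‖) * (18 ^ n * (‖w‖ ^ n)⁻¹ * ((1 - ‖v‖ + dist θ z) ^ n)⁻¹) := by gcongr
          _ = _ := by ring
    _ = ENNReal.ofReal (18 ^ n * (‖w‖ ^ n)⁻¹) * ∫⁻ v in ann n r, (ENNReal.ofReal (wt a r ‖v‖) * F ‖v‖ (‖v‖⁻¹ • v)) := by
        rw [lintegral_const_mul]
        have := wt_meas a r
        exact Measurable.mul (by fun_prop) (hF.comp (by fun_prop : Measurable fun v : EuclideanSpace ℝ (Fin n) => (‖v‖, ‖v‖⁻¹ • v)))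
    _ ≤ ENNReal.ofReal (18 ^ n * (‖w‖ ^ n)⁻¹) * (ENNReal.ofReal K * ENNReal.ofReal (N * 2 ^ n)) := by gcongr
    _ = _ := by
        rw [← ENNReal.ofReal_mul hK.le, ← ENNReal.ofReal_mul (by positivity)]
        congr 1; ring

end St16

namespace St16

lemma weak_lim {X : Type*} [MeasurableSpace X] (τ : Measure X) [IsFiniteMeasure τ] (m : ℕ → Measure X) (K : ℝ≥0)
    (hm : ∀ k, m k ≤ (K : ℝ≥0∞) • τ) : ∃ φ : X → ℝ, Measurable φ ∧ (∀ w, 0 ≤ φ w) ∧ Integrable φ τ ∧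
      ∀ f : X → ℝ, MemLp f 2 τ → Tendsto (fun k => ∫ x, f x ∂(m k)) (hyperfilter ℕ) (𝓝 (∫ x, f x * φ x ∂τ)) := by
  have hac : ∀ k, m k ≪ τ := fun k => (Measure.absolutelyContinuous_of_le (hm k)).trans (Measure.smul_absolutelyContinuous)
  have hfinm : ∀ k, IsFiniteMeasure (m k) := fun k => ⟨((hm k) univ).trans_lt (by
    rw [Measure.smul_apply]; exact ENNReal.mul_lt_top ENNReal.coe_lt_top (measure_lt_top _ _))⟩
  let D : ℕ → X → ℝ := fun k x => ((m k).rnDeriv τ x).toReal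
  have hDb : ∀ k, ∀ᵐ x ∂τ, ‖D k x‖ ≤ K := by
    intro k
    have : (m k).rnDeriv τ ≤ᵐ[τ] fun _ => (K : ℝ≥0∞) := by
      refine ae_le_of_forall_setLIntegral_le_of_sigmaFinite (Measure.measurable_rnDeriv _ _) fun s hs _ => ?_
      calc _ ≤ m k s := Measure.setLIntegral_rnDeriv_le s
        _ ≤ _ := by rw [setLIntegral_const]; exact (hm k) s
    filter_upwards [this] with x hx
    simp only [D]
    rw [Real.norm_eq_abs, abs_of_nonneg ENNReal.toReal_nonneg]
    exact ENNReal.toReal_le_of_le_ofReal K.2 (by simpa using hx)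
  have hDm : ∀ k, AEStronglyMeasurable (D k) τ := fun k => 
    (Measure.measurable_rnDeriv _ _).ennreal_toReal.aestronglyMeasurable
  have hD2 : ∀ k, MemLp (D k) 2 τ := fun k => MemLp.of_bound (hDm k) K (hDb k)
  let R : ℝ := (τ.real univ) ^ ((2:ℝ≥0∞).toReal⁻¹) * K
  have hR : ∀ k, ‖(hD2 k).toLp (D k)‖ ≤ R := by
    intro k
    refine Lp.norm_le_of_ae_bound K.2 ?_
    filter_upwards [(hD2 k).coeFn_toLp, hDb k] with x hx hx2
    rw [hx]; exact hx2
  let Λ : ℕ → WeakDual ℝ (Lp ℝ 2 τ) := fun k => StrongDual.toWeakDual (InnerProductSpace.toDual ℝ _ ((hD2 k).toLp (D k)))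
  have hΛ : ∀ k, Λ k ∈ WeakDual.toStrongDual ⁻¹' closedBall (0 : StrongDual ℝ (Lp ℝ 2 τ)) R := by
    intro k
    simp only [mem_preimage, mem_closedBall, dist_zero_right]
    calc _ = ‖InnerProductSpace.toDual ℝ _ ((hD2 k).toLp (D k))‖ := rfl
      _ ≤ R := by rw [LinearIsometryEquiv.norm_map]; exact hR k
  obtain ⟨ℓ, -, hℓ⟩ := (WeakDual.isCompact_closedBall (0 : StrongDual ℝ (Lp ℝ 2 τ)) R).ultrafilter_le_nhds ((hyperfilter ℕ).map Λ)
    (by rw [le_principal_iff]; exact (Ultrafilter.mem_map (f := hyperfilter ℕ)).2 (univ_mem' hΛ))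
  have hℓ' : Tendsto Λ (hyperfilter ℕ) (𝓝 ℓ) := hℓ
  set ψ := (InnerProductSpace.toDual ℝ (Lp ℝ 2 τ)).symm (WeakDual.toStrongDual ℓ) with hψ
  have hlim : ∀ f : X → ℝ, MemLp f 2 τ → Tendsto (fun k => ∫ x, f x ∂(m k)) (hyperfilter ℕ) (𝓝 (∫ x, f x * ψ x ∂τ)) := by
    intro f hf
    have h1 : Tendsto (fun k => Λ k (hf.toLp f)) (hyperfilter ℕ) (𝓝 (ℓ (hf.toLp f))) :=
      ((WeakDual.eval_continuous (hf.toLp f)).tendsto ℓ).comp hℓ'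
    have e1 : ∀ k, Λ k (hf.toLp f) = ∫ x, f x ∂(m k) := by
      intro k
      rw [← integral_rnDeriv_smul (hac k)]
      change inner ℝ ((hD2 k).toLp (D k)) (hf.toLp f) = _
      rw [L2.inner_def]
      apply integral_congr_ae
      filter_upwards [(hD2 k).coeFn_toLp, hf.coeFn_toLp] with x hx hx2
      rw [hx, hx2]
      simp [D, mul_comm]
    have e2 : ℓ (hf.toLp f) = ∫ x, f x * ψ x ∂τ := by
      have : ℓ (hf.toLp f) = inner ℝ ψ (hf.toLp f) := by
        rw [hψ, InnerProductSpace.toDual_symm_apply]; rfl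
      rw [this, L2.inner_def]
      apply integral_congr_ae
      filter_upwards [hf.coeFn_toLp] with x hx2
      rw [hx2]
      simp
    rw [← e2]
    exact h1.congr e1
  have hψi : Integrable ψ τ := (Lp.memLp ψ).integrable (by norm_num)
  have hpos : 0 ≤ᵐ[τ] ψ := by
    refine ae_nonneg_of_forall_setIntegral_nonneg hψi fun s hs _ => ?_
    have := hlim (s.indicator 1) ((memLp_const (1:ℝ)).indicator hs)
    have e : ∫ x, s.indicator 1 x * ψ x ∂τ = ∫ x in s, ψ x ∂τ := by
      rw [← integral_indicator hs]
      congr 1; ext x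
      by_cases h : x ∈ s <;> simp [h]
    rw [← e]
    refine ge_of_tendsto this (Eventually.of_forall fun k => integral_nonneg fun x => ?_)
    exact indicator_nonneg (fun _ _ => zero_le_one) _
  have heq : (fun x => max (ψ x) 0) =ᵐ[τ] ψ := by
    filter_upwards [hpos] with x hx
    exact max_eq_left hx
  refine ⟨fun x => max (ψ x) 0, (Lp.stronglyMeasurable ψ).measurable.max measurable_const, fun w => le_max_right _ _, hψi.congr heq.symm, fun f hf => ?_⟩
  have : ∫ x, f x * max (ψ x) 0 ∂τ = ∫ x, f x * ψ x ∂τ := by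
    apply integral_congr_ae
    filter_upwards [heq] with x hx
    rw [hx]
  rw [this]; exact hlim f hf

end St16

namespace St16

lemma wt_nonneg {a r ρ : ℝ} (h1 : r < ρ) (h2 : ρ < 1) : 0 ≤ wt a r ρ :=
  mul_nonneg (Real.rpow_nonneg (by linarith) _) (Real.rpow_nonneg (by linarith) _)

lemma ann_vanish {n : ℕ} (hn : 2 ≤ n) (a : ℝ) (ha : a ∈ Ioo (0:ℝ) 1) (m : Measure (EuclideanSpace ℝ (Fin n))) [SFinite m]
    (hm1 : ∀ᵐ w ∂m, 1 < ‖w‖) (hm : ∫⁻ w, ENNReal.ofReal ((‖w‖ ^ n)⁻¹) ∂m ≠ ∞) (r : ℕ → ℝ) (hr0 : ∀ k, 0 ≤ r k)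
    (hr1 : ∀ k, r k < 1) (hr : Tendsto r atTop (𝓝 1)) :
    Tendsto (fun k => ∫⁻ v in ann n (r k), ENNReal.ofReal (wt a (r k) ‖v‖ * (1 - ‖v‖)) *
      ∫⁻ w, ENNReal.ofReal ((dist v w ^ n)⁻¹) ∂m) atTop (𝓝 0) := by
  have hw := fun r => wt_meas a r
  have hsw : ∀ k, ∫⁻ v in ann n (r k), ENNReal.ofReal (wt a (r k) ‖v‖ * (1 - ‖v‖)) *
      ∫⁻ w, ENNReal.ofReal ((dist v w ^ n)⁻¹) ∂m = ∫⁻ w, (∫⁻ v in ann n (r k), ENNReal.ofReal (wt a (r k) ‖v‖ * (1 - ‖v‖) * (dist v w ^ n)⁻¹)) ∂m := by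
    intro k
    rw [← lintegral_lintegral_swap]
    · refine setLIntegral_congr_fun (ann_meas n _) fun v hv => ?_
      have h0 : 0 ≤ wt a (r k) ‖v‖ * (1 - ‖v‖) := mul_nonneg (wt_nonneg hv.1 hv.2) (by linarith [hv.2])
      have hm' : Measurable (fun w => ENNReal.ofReal ((dist v w ^ n)⁻¹)) := by fun_prop
      rw [← lintegral_const_mul _ hm']
      refine lintegral_congr fun w => ?_
      rw [ENNReal.ofReal_mul h0]
    · apply Measurable.aemeasurable
      have := hw (r k)
      unfold Function.uncurry
      fun_prop
  simp_rw [hsw]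
  obtain ⟨C, hC, hCb⟩ := ann_int_bound hn a ha
  obtain ⟨K, hK, hKb⟩ := beta_bound a ha
  have h0 : (0 : ℝ≥0∞) = ∫⁻ w, 0 ∂m := by simp
  rw [h0]
  refine tendsto_lintegral_of_dominated_convergence (fun w => ENNReal.ofReal (C * (‖w‖ ^ n)⁻¹)) ?_ ?_ ?_ ?_
  · intro k
    have := hw (r k)
    apply Measurable.lintegral_prod_left' (f := fun p : EuclideanSpace ℝ (Fin n) × EuclideanSpace ℝ (Fin n) => ENNReal.ofReal (wt a (r k) ‖p.1‖ * (1 - ‖p.1‖) * (dist p.1 p.2 ^ n)⁻¹))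
    fun_prop
  · intro k
    filter_upwards [hm1] with w hw1
    exact hCb w hw1 _ (hr0 k) (hr1 k)
  · simp_rw [ENNReal.ofReal_mul hC.le]
    rw [lintegral_const_mul _ (by fun_prop)]
    exact ENNReal.mul_ne_top ENNReal.ofReal_ne_top hm
  · filter_upwards [hm1] with w hw1
    have hb : ∀ k, ∫⁻ v in ann n (r k), ENNReal.ofReal (wt a (r k) ‖v‖ * (1 - ‖v‖) * (dist v w ^ n)⁻¹) ≤
       ENNReal.ofReal ((1 - r k) * ((‖w‖ - 1) ^ n)⁻¹) * (ENNReal.ofReal K * nuS n univ) := by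
      intro k
      have h1 := ann_bound hn a K hKb (fun _ _ => 1) measurable_const (nuS n univ) (fun ρ _ => by simp) (r k) (hr0 k) (hr1 k)
      have hwm : Measurable fun v : EuclideanSpace ℝ (Fin n) => ENNReal.ofReal (wt a (r k) ‖v‖) := by
        have := hw (r k); fun_prop
      calc _ ≤ ∫⁻ v in ann n (r k), ENNReal.ofReal ((1 - r k) * ((‖w‖ - 1) ^ n)⁻¹) * ENNReal.ofReal (wt a (r k) ‖v‖) := by
            refine setLIntegral_mono' (ann_meas n _) fun v hv => ?_
            rw [← ENNReal.ofReal_mul (mul_nonneg (by linarith [hr1 k]) (by have : 0 < ‖w‖ - 1 := by linarith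
                                                                           positivity))]
            apply ENNReal.ofReal_le_ofReal
            have e1 : ‖w‖ - 1 ≤ dist v w := by
              have := norm_sub_norm_le w v
              rw [dist_eq_norm, norm_sub_rev]; linarith [hv.2]
            have e2 : (dist v w ^ n)⁻¹ ≤ ((‖w‖ - 1) ^ n)⁻¹ := 
              inv_anti₀ (pow_pos (by linarith) _) (pow_le_pow_left₀ (by linarith) e1 _)
            have e3 := wt_nonneg (a := a) hv.1 hv.2
            calc _ ≤ wt a (r k) ‖v‖ * (1 - r k) * ((‖w‖ - 1) ^ n)⁻¹ := by
                  apply mul_le_mul _ e2 (by positivity) (mul_nonneg e3 (by linarith [hr1 k]))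
                  apply mul_le_mul_of_nonneg_left (by linarith [hv.1]) e3
              _ = _ := by ring
        _ ≤ _ := by
            rw [lintegral_const_mul _ hwm]
            simp only [mul_one] at h1
            exact mul_le_mul_right h1 _
    refine tendsto_of_tendsto_of_tendsto_of_le_of_le tendsto_const_nhds ?_ (fun k => zero_le) hb
    have : Tendsto (fun k => ENNReal.ofReal ((1 - r k) * ((‖w‖ - 1) ^ n)⁻¹)) atTop (𝓝 0) := by
      rw [← ENNReal.ofReal_zero]
      apply ENNReal.tendsto_ofReal
      have := ((tendsto_const_nhds (x := (1:ℝ))).sub hr).mul_const (((‖w‖ - 1) ^ n)⁻¹)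
      simpa using this
    have h2 := ENNReal.Tendsto.mul_const (b := ENNReal.ofReal K * nuS n univ) this (Or.inr (ENNReal.mul_ne_top ENNReal.ofReal_ne_top (measure_ne_top _ _)))
    simpa using h2

end St16

namespace St16

noncomputable def Cn (n : ℕ) (α : ℝ) : ℝ :=
  Real.Gamma (n / 2) * Real.pi ^ (-(n : ℝ) / 2 - 1) * Real.sin (Real.pi * α / 2)

lemma Cn_pos {n : ℕ} (hn : 2 ≤ n) {α : ℝ} (hα : α ∈ Ioo (0:ℝ) 2) : 0 < Cn n α := by
  unfold Cn
  have h1 : 0 < Real.Gamma (n / 2) := Real.Gamma_pos_of_pos (by have : (2:ℝ) ≤ n := by exact_mod_cast hn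
                                                                linarith)
  have h2 : 0 < Real.sin (Real.pi * α / 2) := Real.sin_pos_of_pos_of_lt_pi (by have := Real.pi_pos; have := hα.1; positivity)
    (by have := Real.pi_pos; nlinarith [hα.2])
  have := Real.pi_pos
  positivity

/-- weight of v -/
noncomputable def dn (n : ℕ) (a r : ℝ) (v : EuclideanSpace ℝ (Fin n)) : ℝ := (‖v‖ ^ 2 - r ^ 2) ^ (-a)

lemma dn_meas (n : ℕ) (a r : ℝ) : Measurable (dn n a r) := by unfold dn; fun_prop

lemma dn_nonneg {n : ℕ} {a r : ℝ} {v : EuclideanSpace ℝ (Fin n)} (hr : 0 ≤ r) (h : r < ‖v‖) : 0 ≤ dn n a r v :=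
  Real.rpow_nonneg (by nlinarith) _

lemma kern_eq {n : ℕ} {α r : ℝ} {x v : EuclideanSpace ℝ (Fin n)} (hr : 0 ≤ r) (hx : ‖x‖ < r) (hv : r < ‖v‖) :
    stablePoissonKernel n α 0 r x v = (Cn n α * (r ^ 2 - ‖x‖ ^ 2) ^ (α / 2)) * (dn n (α / 2) r v * (dist x v ^ n)⁻¹) := by
  unfold stablePoissonKernel Cn dn
  rw [dist_zero_right, dist_zero_right, Real.div_rpow (by nlinarith [norm_nonneg x]) (by nlinarith), Real.rpow_neg dist_nonneg, Real.rpow_natCast,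
    Real.rpow_neg (by nlinarith)]
  ring

/-- out n = outside -/
def out (n : ℕ) (r : ℝ) : Set (EuclideanSpace ℝ (Fin n)) := {v | r < ‖v‖}

lemma out_meas (n : ℕ) (r : ℝ) : MeasurableSet (out n r) :=
  measurableSet_lt measurable_const measurable_norm

noncomputable def cx (n : ℕ) (α r : ℝ) (x : EuclideanSpace ℝ (Fin n)) : ℝ := Cn n α * (r ^ 2 - ‖x‖ ^ 2) ^ (α / 2)

noncomputable def Iu (n : ℕ) (α : ℝ) (u : EuclideanSpace ℝ (Fin n) → ℝ) (r : ℝ) (x : EuclideanSpace ℝ (Fin n)) (s : Set (EuclideanSpace ℝ (Fin n))) : ℝ≥0∞ :=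
  ∫⁻ v in s, ENNReal.ofReal (dn n (α / 2) r v * (dist x v ^ n)⁻¹ * u v)

lemma lint_kern {n : ℕ} {α r : ℝ} (hn : 2 ≤ n) (hα : α ∈ Ioo (0:ℝ) 2) {x : EuclideanSpace ℝ (Fin n)} (hr : 0 ≤ r) (hx : ‖x‖ < r)
    {u : EuclideanSpace ℝ (Fin n) → ℝ} (hu : Measurable u) (hu0 : ∀ x, 0 ≤ u x) :
    ∫⁻ v in out n r, ENNReal.ofReal (stablePoissonKernel n α 0 r x v * u v) = ENNReal.ofReal (cx n α r x) * Iu n α u r x (out n r) := by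
  have hd := dn_meas n (α / 2) r
  have hm : Measurable fun v => ENNReal.ofReal (dn n (α / 2) r v * (dist x v ^ n)⁻¹ * u v) := by fun_prop
  have hc : 0 ≤ cx n α r x := mul_nonneg (Cn_pos hn hα).le (Real.rpow_nonneg (by nlinarith [norm_nonneg x]) _)
  rw [Iu, ← lintegral_const_mul _ hm]
  refine setLIntegral_congr_fun (out_meas n r) fun v hv => ?_
  rw [kern_eq hr hx hv, ← ENNReal.ofReal_mul hc, cx]
  congr 1; ring

lemma kern_nonneg {n : ℕ} {α r : ℝ} (hn : 2 ≤ n) (hα : α ∈ Ioo (0:ℝ) 2) {x v : EuclideanSpace ℝ (Fin n)} (hr : 0 ≤ r) (hx : ‖x‖ < r) (hv : r < ‖v‖) :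
    0 ≤ stablePoissonKernel n α 0 r x v := by
  rw [kern_eq hr hx hv]
  have := dn_nonneg (a := α / 2) hr hv
  have := Cn_pos hn hα
  have : 0 ≤ (r ^ 2 - ‖x‖ ^ 2) ^ (α / 2) := Real.rpow_nonneg (by nlinarith [norm_nonneg x]) _
  positivity

lemma kern_meas (n : ℕ) (α r : ℝ) (x : EuclideanSpace ℝ (Fin n)) : Measurable (fun v => stablePoissonKernel n α 0 r x v) := by
  unfold stablePoissonKernel; fun_prop

lemma mean_val {n : ℕ} (hn : 2 ≤ n) {α : ℝ} (hα : α ∈ Ioo (0:ℝ) 2) {u : EuclideanSpace ℝ (Fin n) → ℝ}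
    (hu : IsAlphaHarmonic n α (ball (0 : EuclideanSpace ℝ (Fin n)) 1) u) {r : ℝ} (hr : r < 1) {x : EuclideanSpace ℝ (Fin n)} (hx : ‖x‖ < r) :
    ENNReal.ofReal (cx n α r x) * Iu n α u r x (out n r) = ENNReal.ofReal (u x) := by
  obtain ⟨hum, hu0, -, hu3⟩ := hu
  have hr0 : 0 < r := (norm_nonneg x).trans_lt hx
  obtain ⟨h1, h2⟩ := hu3 0 r hr0 (closedBall_subset_ball hr) x (by simpa using hx)
  rw [← lint_kern hn hα hr0.le hx hum hu0, ← h2]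
  simp only [dist_zero_right] at h1 ⊢
  rw [ofReal_integral_eq_lintegral_ofReal h1]
  · rfl
  · filter_upwards [ae_restrict_mem (out_meas n r)] with v hv
    exact mul_nonneg (kern_nonneg hn hα hr0.le hx hv) (hu0 v)

lemma Iu_split {n : ℕ} (hn : 2 ≤ n) (α : ℝ) (u : EuclideanSpace ℝ (Fin n) → ℝ) {r : ℝ} (hr : r < 1) (x : EuclideanSpace ℝ (Fin n)) :
    Iu n α u r x (out n r) = Iu n α u r x (ann n r) + Iu n α u r x (out n 1) := by
  have := nontriv hn
  unfold Iu
  rw [← lintegral_union (out_meas n 1)]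
  · refine setLIntegral_congr ?_
    have h0 : volume (sphere (0 : EuclideanSpace ℝ (Fin n)) 1) = 0 := Measure.addHaar_sphere _ _ _
    have : ∀ᵐ v : EuclideanSpace ℝ (Fin n), v ∉ sphere (0 : EuclideanSpace ℝ (Fin n)) 1 := measure_eq_zero_iff_ae_notMem.1 h0
    filter_upwards [this] with v hv
    simp only [mem_sphere, dist_zero_right] at hv
    apply propext
    change r < ‖v‖ ↔ ((r < ‖v‖ ∧ ‖v‖ < 1) ∨ 1 < ‖v‖)
    constructor
    · intro h
      rcases lt_or_gt_of_ne hv with h' | h'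
      · exact Or.inl ⟨h, h'⟩
      · exact Or.inr h'
    · rintro (h | h)
      · exact h.1
      · linarith
  · rw [Set.disjoint_left]
    intro v hv hv'
    exact absurd hv.2 (not_lt.2 (le_of_lt hv'))

noncomputable def rs (k : ℕ) : ℝ := 1 - 1 / ((k : ℝ) + 2)

lemma rs_lt (k : ℕ) : rs k < 1 := by unfold rs; have : 0 < 1 / ((k : ℝ) + 2) := by positivity
                                     linarith
lemma rs_ge (k : ℕ) : 1 / 2 ≤ rs k := by
  unfold rs
  have : 1 / ((k : ℝ) + 2) ≤ 1 / 2 := one_div_le_one_div_of_le (by norm_num) (by linarith [Nat.cast_nonneg (α := ℝ) k])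
  linarith
lemma rs_mono : Monotone rs := by
  intro j k h
  unfold rs
  have : (j : ℝ) ≤ k := by exact_mod_cast h
  have : 1 / ((k : ℝ) + 2) ≤ 1 / ((j : ℝ) + 2) := one_div_le_one_div_of_le (by positivity) (by linarith)
  linarith
lemma rs_lim : Tendsto rs atTop (𝓝 1) := by
  have h1 : Tendsto (fun k : ℕ => (k : ℝ) + 2) atTop atTop := tendsto_natCast_atTop_atTop.atTop_add tendsto_const_nhds
  have h := (tendsto_const_nhds (x := (1:ℝ))).sub (h1.inv_tendsto_atTop)
  simp only [sub_zero] at h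
  refine h.congr fun k => ?_
  simp [rs]

lemma Iu_out_lim {n : ℕ} {α : ℝ} (hα : α ∈ Ioo (0:ℝ) 2) {u : EuclideanSpace ℝ (Fin n) → ℝ}
    (hum : Measurable u) (hu0 : ∀ x, 0 ≤ u x) (x : EuclideanSpace ℝ (Fin n)) :
    Tendsto (fun k => Iu n α u (rs k) x (out n 1)) atTop (𝓝 (Iu n α u 1 x (out n 1))) := by
  unfold Iu
  refine lintegral_tendsto_of_tendsto_of_monotone (fun k => ?_) ?_ ?_
  · have := dn_meas n (α / 2) (rs k)
    apply Measurable.aemeasurable; fun_prop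
  · filter_upwards [ae_restrict_mem (out_meas n 1)] with v hv
    intro j k hjk
    have hv : 1 < ‖v‖ := hv
    apply ENNReal.ofReal_le_ofReal
    apply mul_le_mul_of_nonneg_right _ (hu0 v)
    apply mul_le_mul_of_nonneg_right _ (by positivity)
    unfold dn
    have := rs_mono hjk
    have := rs_lt k
    have := rs_ge j
    apply Real.rpow_le_rpow_of_nonpos (by nlinarith) (by nlinarith) (by linarith [hα.1])
  · filter_upwards [ae_restrict_mem (out_meas n 1)] with v hv
    have hv : 1 < ‖v‖ := hv
    apply ENNReal.tendsto_ofReal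
    apply Tendsto.mul_const
    apply Tendsto.mul_const
    unfold dn
    apply Tendsto.rpow_const
    · exact tendsto_const_nhds.sub (rs_lim.pow 2)
    · left; nlinarith

lemma cx_lim {n : ℕ} {α : ℝ} (hα : α ∈ Ioo (0:ℝ) 2) (x : EuclideanSpace ℝ (Fin n)) :
    Tendsto (fun k => ENNReal.ofReal (cx n α (rs k) x)) atTop (𝓝 (ENNReal.ofReal (cx n α 1 x))) := by
  apply ENNReal.tendsto_ofReal
  unfold cx
  apply Tendsto.const_mul
  apply Tendsto.rpow_const
  · exact (rs_lim.pow 2).sub tendsto_const_nhds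
  · right; linarith [hα.1]

lemma cx_pos {n : ℕ} (hn : 2 ≤ n) {α : ℝ} (hα : α ∈ Ioo (0:ℝ) 2) {r : ℝ} {x : EuclideanSpace ℝ (Fin n)} (hx : ‖x‖ < r) :
    0 < cx n α r x := mul_pos (Cn_pos hn hα) (Real.rpow_pos_of_pos (by nlinarith [norm_nonneg x]) _)

lemma step1 {n : ℕ} (hn : 2 ≤ n) {α : ℝ} (hα : α ∈ Ioo (0:ℝ) 2) {u : EuclideanSpace ℝ (Fin n) → ℝ}
    (hu : IsAlphaHarmonic n α (ball (0 : EuclideanSpace ℝ (Fin n)) 1) u) {x : EuclideanSpace ℝ (Fin n)} (hx : ‖x‖ < 1) :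
    Iu n α u 1 x (out n 1) ≠ ∞ ∧ 
    (∫ v in {v : EuclideanSpace ℝ (Fin n) | 1 < ‖v‖}, stablePoissonKernel n α 0 1 x v * u v) = (ENNReal.ofReal (cx n α 1 x) * Iu n α u 1 x (out n 1)).toReal ∧
    Tendsto (fun k => ENNReal.ofReal (cx n α (rs k) x) * Iu n α u (rs k) x (ann n (rs k))) atTop
      (𝓝 (ENNReal.ofReal (u x - (ENNReal.ofReal (cx n α 1 x) * Iu n α u 1 x (out n 1)).toReal))) := by
  have hc1 : ENNReal.ofReal (cx n α 1 x) ≠ 0 := by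
    simpa using cx_pos hn hα hx
  have hev : ∀ᶠ k in atTop, ‖x‖ < rs k := rs_lim.eventually (lt_mem_nhds hx)
  have hlim : Tendsto (fun k => ENNReal.ofReal (cx n α (rs k) x) * Iu n α u (rs k) x (out n 1)) atTop
      (𝓝 (ENNReal.ofReal (cx n α 1 x) * Iu n α u 1 x (out n 1))) :=
    ENNReal.Tendsto.mul (cx_lim hα x) (Or.inl hc1) (Iu_out_lim hα hu.1 hu.2.1 x) (Or.inr ENNReal.ofReal_ne_top)
  have hsum : ∀ᶠ k in atTop, ENNReal.ofReal (cx n α (rs k) x) * Iu n α u (rs k) x (ann n (rs k)) + 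
      ENNReal.ofReal (cx n α (rs k) x) * Iu n α u (rs k) x (out n 1) = ENNReal.ofReal (u x) := by
    filter_upwards [hev] with k hk
    rw [← mul_add, ← Iu_split hn α u (rs_lt k) x, mean_val hn hα hu (rs_lt k) hk]
  have hle : ENNReal.ofReal (cx n α 1 x) * Iu n α u 1 x (out n 1) ≤ ENNReal.ofReal (u x) := by
    refine le_of_tendsto hlim ?_
    filter_upwards [hsum] with k hk
    rw [← hk]; exact le_add_self
  have hfin := ne_top_of_le_ne_top ENNReal.ofReal_ne_top hle
  refine ⟨?_, ?_, ?_⟩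
  · intro h
    rw [h, ENNReal.mul_top hc1] at hfin
    exact hfin rfl
  · rw [← lint_kern hn hα zero_le_one hx hu.1 hu.2.1, integral_eq_lintegral_of_nonneg_ae]
    · rfl
    · filter_upwards [ae_restrict_mem (out_meas n 1)] with v hv
      exact mul_nonneg (kern_nonneg hn hα zero_le_one hx hv) (hu.2.1 v)
    · exact ((kern_meas n α 1 x).mul hu.1).aestronglyMeasurable
  · rw [ENNReal.ofReal_sub _ ENNReal.toReal_nonneg, ENNReal.ofReal_toReal hfin]
    refine (ENNReal.Tendsto.sub tendsto_const_nhds hlim (Or.inl ENNReal.ofReal_ne_top)).congr' ?_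
    filter_upwards [hsum] with k hk
    rw [← hk]
    refine ENNReal.add_sub_cancel_right (ne_top_of_le_ne_top (ENNReal.ofReal_ne_top (r := u x)) ?_)
    rw [← hk]; exact le_add_self

end St16

namespace St16

noncomputable def Pe (n : ℕ) (α : ℝ) (u : EuclideanSpace ℝ (Fin n) → ℝ) (x : EuclideanSpace ℝ (Fin n)) : ℝ≥0∞ :=
  ENNReal.ofReal (cx n α 1 x) * Iu n α u 1 x (out n 1)

lemma Pe_meas {n : ℕ} {α : ℝ} {u : EuclideanSpace ℝ (Fin n) → ℝ} (hum : Measurable u) : Measurable (Pe n α u) := by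
  unfold Pe
  apply Measurable.mul
  · unfold cx; fun_prop
  · unfold Iu
    have := dn_meas n (α / 2) 1
    apply Measurable.lintegral_prod_right' (f := fun p : EuclideanSpace ℝ (Fin n) × EuclideanSpace ℝ (Fin n) => ENNReal.ofReal (dn n (α / 2) 1 p.2 * (dist p.1 p.2 ^ n)⁻¹ * u p.2))
    fun_prop

lemma dn_le {n : ℕ} {a r : ℝ} (ha : 0 < a) {v : EuclideanSpace ℝ (Fin n)} (hr : 1 / 2 ≤ r) (hv : r < ‖v‖) :
    dn n a r v ≤ (‖v‖ - r) ^ (-a) := by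
  unfold dn
  apply Real.rpow_le_rpow_of_nonpos (by linarith) (by nlinarith) (by linarith)

noncomputable def muP (n : ℕ) (α : ℝ) (u : EuclideanSpace ℝ (Fin n) → ℝ) : Measure (EuclideanSpace ℝ (Fin n)) :=
  (volume.restrict (out n 1)).withDensity (fun w => ENNReal.ofReal (dn n (α / 2) 1 w * u w))

instance (n : ℕ) (α : ℝ) (u : EuclideanSpace ℝ (Fin n) → ℝ) : SFinite (muP n α u) := by
  unfold muP; infer_instance

lemma Iu_muP {n : ℕ} {α : ℝ} {u : EuclideanSpace ℝ (Fin n) → ℝ} (hum : Measurable u) (hu0 : ∀ x, 0 ≤ u x) (x : EuclideanSpace ℝ (Fin n)) :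
    Iu n α u 1 x (out n 1) = ∫⁻ w, ENNReal.ofReal ((dist x w ^ n)⁻¹) ∂(muP n α u) := by
  unfold Iu muP
  have hd := dn_meas n (α / 2) 1
  rw [lintegral_withDensity_eq_lintegral_mul _ (by fun_prop) (by fun_prop)]
  refine setLIntegral_congr_fun (out_meas n 1) fun w hw => ?_
  have := dn_nonneg (a := α / 2) zero_le_one (v := w) hw
  rw [Pi.mul_apply, ← ENNReal.ofReal_mul (mul_nonneg this (hu0 w))]
  congr 1; ring

lemma muP_ae (n : ℕ) (α : ℝ) (u : EuclideanSpace ℝ (Fin n) → ℝ) : ∀ᵐ w ∂(muP n α u), 1 < ‖w‖ := by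
  unfold muP
  exact (withDensity_absolutelyContinuous _ _).ae_le (ae_restrict_mem (out_meas n 1))

lemma step3 {n : ℕ} (hn : 2 ≤ n) {α : ℝ} (hα : α ∈ Ioo (0:ℝ) 2) {u : EuclideanSpace ℝ (Fin n) → ℝ}
    (hu : IsAlphaHarmonic n α (ball (0 : EuclideanSpace ℝ (Fin n)) 1) u) {x : EuclideanSpace ℝ (Fin n)} (hx : ‖x‖ < 1) :
    Tendsto (fun k => ∫⁻ v in ann n (rs k), ENNReal.ofReal (dn n (α / 2) (rs k) v * (dist x v ^ n)⁻¹) * Pe n α u v) atTop (𝓝 0) := by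
  have ha : α / 2 ∈ Ioo (0:ℝ) 1 := ⟨by linarith [hα.1], by linarith [hα.2]⟩
  have hfin := (step1 hn hα hu (x := 0) (by simp)).1
  rw [Iu_muP hu.1 hu.2.1] at hfin
  simp only [dist_zero_left] at hfin
  have hv := ann_vanish hn (α / 2) ha (muP n α u) (muP_ae n α u) hfin rs (fun k => by linarith [rs_ge k]) rs_lt rs_lim
  set d := (1 - ‖x‖) / 2 with hd
  have hd0 : 0 < d := by rw [hd]; linarith
  have hCn := Cn_pos hn hα
  set C := (d ^ n)⁻¹ * (Cn n α * 2 ^ (α / 2)) with hC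
  have hC0 : 0 ≤ C := by positivity
  have h2 := ENNReal.Tendsto.const_mul (a := ENNReal.ofReal C) hv (Or.inr ENNReal.ofReal_ne_top)
  rw [mul_zero] at h2
  have hev : ∀ᶠ k in atTop, (1 + ‖x‖) / 2 < rs k := rs_lim.eventually (lt_mem_nhds (by linarith))
  refine tendsto_of_tendsto_of_tendsto_of_le_of_le' tendsto_const_nhds h2 (Eventually.of_forall fun _ => zero_le) ?_
  filter_upwards [hev] with k hk
  rw [← lintegral_const_mul' _ _ ENNReal.ofReal_ne_top]
  refine setLIntegral_mono' (ann_meas n _) fun v hv => ?_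
  unfold Pe
  rw [Iu_muP hu.1 hu.2.1, ← mul_assoc, ← mul_assoc]
  apply mul_le_mul_left
  have hr := rs_ge k
  have hdn := dn_nonneg (a := α / 2) (by linarith : 0 ≤ rs k) hv.1
  rw [← ENNReal.ofReal_mul (mul_nonneg hdn (by positivity)), ← ENNReal.ofReal_mul hC0]
  apply ENNReal.ofReal_le_ofReal
  have e1 : (dist x v ^ n)⁻¹ ≤ (d ^ n)⁻¹ := by
    apply inv_anti₀ (by positivity)
    apply pow_le_pow_left₀ hd0.le
    have := norm_sub_norm_le v x
    rw [dist_eq_norm, norm_sub_rev]; linarith [hv.1]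
  have e2 := dn_le ha.1 hr hv.1
  have e3 : (1 ^ 2 - ‖v‖ ^ 2) ^ (α / 2) ≤ 2 ^ (α / 2) * ((1 - ‖v‖) ^ (α / 2 - 1) * (1 - ‖v‖)) := by
    have h1 : 0 < 1 - ‖v‖ := by linarith [hv.2]
    have : (1 - ‖v‖) ^ (α / 2 - 1) * (1 - ‖v‖) = (1 - ‖v‖) ^ (α / 2) := by
      rw [← Real.rpow_add_one h1.ne']; congr 1; ring
    rw [this, ← Real.mul_rpow (by norm_num) h1.le]
    apply Real.rpow_le_rpow (by nlinarith [norm_nonneg v]) (by nlinarith [norm_nonneg v]) ha.1.le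
  have h1 : 0 < 1 - ‖v‖ := by linarith [hv.2]
  have h4 : 0 ≤ (1 ^ 2 - ‖v‖ ^ 2) ^ (α / 2) := Real.rpow_nonneg (by nlinarith [norm_nonneg v]) _
  have h5 : 0 < ‖v‖ - rs k := by linarith [hv.1]
  calc _ ≤ ((‖v‖ - rs k) ^ (-(α / 2)) * (d ^ n)⁻¹) * (Cn n α * (2 ^ (α / 2) * ((1 - ‖v‖) ^ (α / 2 - 1) * (1 - ‖v‖)))) := by
        unfold cx
        gcongr
    _ = _ := by unfold wt; rw [hC]; ring

noncomputable def gu (n : ℕ) (α : ℝ) (u : EuclideanSpace ℝ (Fin n) → ℝ) (x : EuclideanSpace ℝ (Fin n)) : ℝ :=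
  u x - (Pe n α u x).toReal

lemma gu_meas {n : ℕ} {α : ℝ} {u : EuclideanSpace ℝ (Fin n) → ℝ} (hum : Measurable u) : Measurable (gu n α u) := 
  hum.sub (Pe_meas hum).ennreal_toReal

lemma step4 {n : ℕ} (hn : 2 ≤ n) {α : ℝ} (hα : α ∈ Ioo (0:ℝ) 2) {u : EuclideanSpace ℝ (Fin n) → ℝ}
    (hu : IsAlphaHarmonic n α (ball (0 : EuclideanSpace ℝ (Fin n)) 1) u) (hg : ∀ x, ‖x‖ < 1 → 0 ≤ gu n α u x)
    {x : EuclideanSpace ℝ (Fin n)} (hx : ‖x‖ < 1) :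
    Tendsto (fun k => ENNReal.ofReal (cx n α (rs k) x) * 
      ∫⁻ v in ann n (rs k), ENNReal.ofReal (dn n (α / 2) (rs k) v * (dist x v ^ n)⁻¹ * gu n α u v)) atTop (𝓝 (ENNReal.ofReal (gu n α u x))) := by
  have h1 := (step1 hn hα hu hx).2.2
  have h3 := ENNReal.Tendsto.mul (cx_lim hα x) (Or.inr (by simp)) (step3 hn hα hu hx) (Or.inr ENNReal.ofReal_ne_top)
  rw [mul_zero] at h3
  have h5 := ENNReal.Tendsto.sub h1 h3 (Or.inl ENNReal.ofReal_ne_top)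
  rw [tsub_zero] at h5
  have hPe := Pe_meas (α := α) hu.1
  have hgm := gu_meas (α := α) hu.1
  refine h5.congr' ?_
  have hfin := h3.eventually (gt_mem_nhds ENNReal.zero_lt_top)
  filter_upwards [hfin] with k hk
  have hd := dn_meas n (α / 2) (rs k)
  have : Iu n α u (rs k) x (ann n (rs k)) = (∫⁻ v in ann n (rs k), ENNReal.ofReal (dn n (α / 2) (rs k) v * (dist x v ^ n)⁻¹ * gu n α u v)) +
    ∫⁻ v in ann n (rs k), ENNReal.ofReal (dn n (α / 2) (rs k) v * (dist x v ^ n)⁻¹) * Pe n α u v := by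
    rw [← lintegral_add_left (by fun_prop)]
    refine setLIntegral_congr_fun (ann_meas n _) fun v hv => ?_
    have hdn := dn_nonneg (a := α / 2) (by linarith [rs_ge k] : 0 ≤ rs k) hv.1
    have h0 : 0 ≤ dn n (α / 2) (rs k) v * (dist x v ^ n)⁻¹ := by positivity
    have hfinv : Pe n α u v ≠ ∞ := ENNReal.mul_ne_top ENNReal.ofReal_ne_top (step1 hn hα hu hv.2).1
    rw [ENNReal.ofReal_mul h0, ENNReal.ofReal_mul h0, ← mul_add]
    congr 1
    rw [← ENNReal.ofReal_toReal hfinv]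
    rw [← ENNReal.ofReal_add (hg v hv.2) ENNReal.toReal_nonneg]
    congr 1
    unfold gu; ring
  rw [this, mul_add]
  exact ENNReal.add_sub_cancel_right hk.ne

noncomputable def kap (n : ℕ) (α : ℝ) (u : EuclideanSpace ℝ (Fin n) → ℝ) (k : ℕ) : Measure (EuclideanSpace ℝ (Fin n)) :=
  (volume.restrict (ann n (rs k))).withDensity (fun v => ENNReal.ofReal (dn n (α / 2) (rs k) v * gu n α u v))

noncomputable def prj (n : ℕ) (v : EuclideanSpace ℝ (Fin n)) : EuclideanSpace ℝ (Fin n) := ‖v‖⁻¹ • v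

lemma prj_meas (n : ℕ) : Measurable (prj n) := by unfold prj; fun_prop

lemma step5 {n : ℕ} (hn : 2 ≤ n) {α : ℝ} (hα : α ∈ Ioo (0:ℝ) 2) {u : EuclideanSpace ℝ (Fin n) → ℝ} (c : ℝ) (hc : 0 < c)
    (hum : Measurable u) (hg2 : ∀ x, ‖x‖ < 1 → gu n α u x ≤ c * (1 - ‖x‖) ^ (α / 2 - 1)) :
    ∃ K : ℝ≥0, ∀ k, (kap n α u k).map (prj n) ≤ (K : ℝ≥0∞) • tauS n := by
  have ha : α / 2 ∈ Ioo (0:ℝ) 1 := ⟨by linarith [hα.1], by linarith [hα.2]⟩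
  obtain ⟨K, hK, hKb⟩ := beta_bound (α / 2) ha
  obtain ⟨L, hL, hLb⟩ := nuS_le_tauS hn
  refine ⟨Real.toNNReal c * (Real.toNNReal K * L), fun k => Measure.le_iff.2 fun s hs => ?_⟩
  have hgm := gu_meas (α := α) hum
  have hd := dn_meas n (α / 2) (rs k)
  rw [Measure.map_apply (prj_meas n) hs, kap, withDensity_apply _ (prj_meas n hs)]
  have hF : Measurable (Function.uncurry (fun (_ : ℝ) (θ : EuclideanSpace ℝ (Fin n)) => s.indicator (1 : EuclideanSpace ℝ (Fin n) → ℝ≥0∞) θ)) := 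
    (measurable_one.indicator hs).comp measurable_snd
  have hb := ann_bound hn (α / 2) K hKb _ hF (nuS n s) (fun ρ _ => by simp [lintegral_indicator hs]) (rs k) (by linarith [rs_ge k]) (rs_lt k)
  calc _ = ∫⁻ v in ann n (rs k), (prj n ⁻¹' s).indicator (fun v => ENNReal.ofReal (dn n (α / 2) (rs k) v * gu n α u v)) v := 
        (lintegral_indicator (prj_meas n hs) _).symm
    _ ≤ ∫⁻ v in ann n (rs k), ENNReal.ofReal c * (ENNReal.ofReal (wt (α / 2) (rs k) ‖v‖) * s.indicator 1 (‖v‖⁻¹ • v)) := by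
        refine setLIntegral_mono' (ann_meas n _) fun v hv => ?_
        by_cases h : v ∈ prj n ⁻¹' s
        · have h' : ‖v‖⁻¹ • v ∈ s := h
          rw [indicator_of_mem h, indicator_of_mem h', Pi.one_apply, mul_one, ← ENNReal.ofReal_mul hc.le]
          apply ENNReal.ofReal_le_ofReal
          have e1 := dn_le ha.1 (rs_ge k) hv.1
          have e2 := hg2 v hv.2
          have hdn := dn_nonneg (a := α / 2) (by linarith [rs_ge k] : 0 ≤ rs k) hv.1
          have : 0 ≤ (1 - ‖v‖) ^ (α / 2 - 1) := Real.rpow_nonneg (by linarith [hv.2]) _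
          calc _ ≤ dn n (α / 2) (rs k) v * (c * (1 - ‖v‖) ^ (α / 2 - 1)) := by gcongr
            _ ≤ (‖v‖ - rs k) ^ (-(α / 2)) * (c * (1 - ‖v‖) ^ (α / 2 - 1)) := by gcongr
            _ = _ := by unfold wt; ring
        · rw [indicator_of_notMem h]; exact zero_le
    _ ≤ ENNReal.ofReal c * (ENNReal.ofReal K * nuS n s) := by
        rw [lintegral_const_mul' _ _ ENNReal.ofReal_ne_top]
        exact mul_le_mul_right hb _
    _ ≤ ENNReal.ofReal c * (ENNReal.ofReal K * (L * tauS n s)) := by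
        gcongr
        exact hLb s
    _ = _ := by
        rw [Measure.smul_apply, smul_eq_mul]
        push_cast
        simp only [ENNReal.ofReal, mul_assoc]

end St16

namespace St16

lemma kern_unif {n : ℕ} {x : EuclideanSpace ℝ (Fin n)} (hx : ‖x‖ < 1) (ε : ℝ) (hε : 0 < ε) :
    ∀ᶠ k in atTop, ∀ v ∈ ann n (rs k), |(dist x v ^ n)⁻¹ - (dist x (prj n v) ^ n)⁻¹| ≤ ε := by
  set s := closedBall (0 : EuclideanSpace ℝ (Fin n)) 1 ∩ {y | (1 + ‖x‖) / 2 ≤ ‖y‖} with hs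
  have hsc : IsCompact s := (isCompact_closedBall _ _).inter_right (isClosed_le continuous_const continuous_norm)
  have hcont : ContinuousOn (fun y => (dist x y ^ n)⁻¹) s := by
    apply ContinuousOn.inv₀ (by fun_prop)
    intro y hy
    have : x ≠ y := by rintro rfl; have := hy.2; simp only [mem_ofPred_eq] at this; linarith
    exact pow_ne_zero _ (dist_pos.2 this).ne'
  have hu := hsc.uniformContinuousOn_of_continuous hcont
  rw [Metric.uniformContinuousOn_iff_le] at hu
  obtain ⟨δ, hδ, hu⟩ := hu ε hε
  have h1 : ∀ᶠ k in atTop, (1 + ‖x‖) / 2 < rs k := rs_lim.eventually (lt_mem_nhds (by linarith))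
  have h2 : ∀ᶠ k in atTop, 1 - δ < rs k := rs_lim.eventually (lt_mem_nhds (by linarith))
  filter_upwards [h1, h2] with k h1 h2 v hv
  have hv0 : 0 < ‖v‖ := by linarith [hv.1, norm_nonneg x]
  have hp : ‖prj n v‖ = 1 := by unfold prj; rw [norm_smul, norm_inv, norm_norm, inv_mul_cancel₀ hv0.ne']
  have := hu v ⟨by simpa using hv.2.le, by simp only [mem_ofPred_eq]; linarith [hv.1]⟩ (prj n v) ⟨by simp [hp], by simp only [mem_ofPred_eq]; rw [hp]; linarith⟩ ?_
  · rwa [Real.dist_eq] at this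
  · have e : v - prj n v = (1 - ‖v‖⁻¹) • v := by unfold prj; module
    have h1v : 1 ≤ ‖v‖⁻¹ := (one_le_inv₀ hv0).2 hv.2.le
    rw [dist_eq_norm, e, norm_smul, Real.norm_eq_abs, abs_of_nonpos (by linarith)]
    have : -(1 - ‖v‖⁻¹) * ‖v‖ = 1 - ‖v‖ := by field_simp; ring
    rw [this]; linarith [hv.1]

lemma kap_ae (n : ℕ) (α : ℝ) (u : EuclideanSpace ℝ (Fin n) → ℝ) (k : ℕ) : ∀ᵐ v ∂(kap n α u k), v ∈ ann n (rs k) := by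
  unfold kap
  exact (withDensity_absolutelyContinuous _ _).ae_le (ae_restrict_mem (ann_meas n _))

lemma repr_aux {n : ℕ} (hn : 2 ≤ n) {α : ℝ} (hα : α ∈ Ioo (0:ℝ) 2) {u : EuclideanSpace ℝ (Fin n) → ℝ} (c : ℝ) (hc : 0 < c)
    (hu : IsAlphaHarmonic n α (ball (0 : EuclideanSpace ℝ (Fin n)) 1) u) (hg : ∀ x, ‖x‖ < 1 → 0 ≤ gu n α u x)
    (hg2 : ∀ x, ‖x‖ < 1 → gu n α u x ≤ c * (1 - ‖x‖) ^ (α / 2 - 1)) :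
    ∃ φ : EuclideanSpace ℝ (Fin n) → ℝ, Measurable φ ∧ (∀ w, 0 ≤ φ w) ∧ Integrable φ (tauS n) ∧
      ∀ x, ‖x‖ < 1 → gu n α u x = ∫ w, martinKernel n α x w * φ w ∂(tauS n) := by
  haveI : Fact (2 ≤ n) := ⟨hn⟩
  obtain ⟨K, hK⟩ := step5 hn hα c hc hu.1 hg2
  obtain ⟨φ, hφm, hφ0, hφi, hφ⟩ := weak_lim (tauS n) (fun k => (kap n α u k).map (prj n)) K hK
  have hCn := Cn_pos hn hα
  refine ⟨fun w => Cn n α * φ w, hφm.const_mul _, fun w => mul_nonneg hCn.le (hφ0 w), hφi.const_mul _, fun x hx => ?_⟩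
  set M : ℝ := ((K : ℝ≥0∞) * tauS n univ).toReal with hM
  have hMtop : (K : ℝ≥0∞) * tauS n univ ≠ ∞ := ENNReal.mul_ne_top ENNReal.coe_ne_top (measure_ne_top _ _)
  have hmass : ∀ k, kap n α u k univ ≤ (K : ℝ≥0∞) * tauS n univ := by
    intro k
    have := hK k univ
    rwa [Measure.map_apply (prj_meas n) MeasurableSet.univ, preimage_univ, Measure.smul_apply, smul_eq_mul] at this
  have hfin : ∀ k, IsFiniteMeasure (kap n α u k) := fun k => ⟨(hmass k).trans_lt hMtop.lt_top⟩
  have hMr : ∀ k, (kap n α u k).real univ ≤ M := fun k => ENNReal.toReal_mono hMtop (hmass k)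
  set f : EuclideanSpace ℝ (Fin n) → ℝ := fun w => (dist x w ^ n)⁻¹ with hf
  have hfm : Measurable f := by rw [hf]; fun_prop
  have hfb : ∀ w : EuclideanSpace ℝ (Fin n), ‖w‖ = 1 → ‖f w‖ ≤ ((1 - ‖x‖) ^ n)⁻¹ := by
    intro w hw
    rw [Real.norm_eq_abs, abs_of_nonneg (by positivity)]
    apply inv_anti₀ (pow_pos (by linarith) _)
    apply pow_le_pow_left₀ (by linarith)
    have := norm_sub_norm_le w x
    rw [dist_eq_norm, norm_sub_rev]; linarith
  have hf2 : MemLp f 2 (tauS n) := MemLp.of_bound hfm.aestronglyMeasurable (((1 - ‖x‖) ^ n)⁻¹) (by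
    filter_upwards [tauS_ae n] with w hw using hfb w hw)
  have hlim1 := hφ f hf2
  have hlim2 : Tendsto (fun k => cx n α (rs k) x * ∫ v, f v ∂(kap n α u k)) atTop (𝓝 (gu n α u x)) := by
    have h4 := step4 hn hα hu hg hx
    have h4' := (ENNReal.tendsto_toReal ENNReal.ofReal_ne_top).comp h4
    rw [ENNReal.toReal_ofReal (hg x hx)] at h4'
    refine h4'.congr' ?_
    have hev : ∀ᶠ k in atTop, ‖x‖ < rs k := rs_lim.eventually (lt_mem_nhds hx)
    filter_upwards [hev] with k hk
    simp only [Function.comp]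
    rw [ENNReal.toReal_mul, ENNReal.toReal_ofReal (cx_pos hn hα hk).le, integral_eq_lintegral_of_nonneg_ae (Eventually.of_forall fun v => by simp only [hf]; positivity) hfm.aestronglyMeasurable]
    congr 2
    have hd := dn_meas n (α / 2) (rs k)
    have hgm := gu_meas (α := α) hu.1
    unfold kap
    rw [lintegral_withDensity_eq_lintegral_mul _ (by fun_prop) (by fun_prop)]
    refine setLIntegral_congr_fun (ann_meas n _) fun v hv => ?_
    have hdn := dn_nonneg (a := α / 2) (by linarith [rs_ge k] : 0 ≤ rs k) hv.1
    rw [Pi.mul_apply, ← ENNReal.ofReal_mul (mul_nonneg hdn (hg v hv.2))]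
    congr 1; simp only [hf]; ring
  have hdiff : Tendsto (fun k => ∫ v, f v ∂(kap n α u k) - ∫ w, f w ∂((kap n α u k).map (prj n))) atTop (𝓝 0) := by
    rw [Metric.tendsto_nhds]
    intro ε hε
    have hM0 : 0 ≤ M := ENNReal.toReal_nonneg
    have hev : ∀ᶠ k in atTop, ‖x‖ < rs k := rs_lim.eventually (lt_mem_nhds hx)
    filter_upwards [kern_unif hx (ε / (2 * (M + 1))) (by positivity), hev] with k hk hk2
    rw [integral_map (prj_meas n).aemeasurable hfm.aestronglyMeasurable]
    have hpm := prj_meas n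
    have i2 : Integrable (fun v => f (prj n v)) (kap n α u k) := by
      refine Integrable.of_bound (hfm.comp hpm).aestronglyMeasurable (((1 - ‖x‖) ^ n)⁻¹) ?_
      filter_upwards [kap_ae n α u k] with v hv
      apply hfb
      have hv0 : 0 < ‖v‖ := by linarith [hv.1, norm_nonneg x]
      unfold prj; rw [norm_smul, norm_inv, norm_norm, inv_mul_cancel₀ hv0.ne']
    have i3 : Integrable (fun v => f v - f (prj n v)) (kap n α u k) := by
      refine Integrable.of_bound (hfm.sub (hfm.comp hpm)).aestronglyMeasurable (ε / (2 * (M + 1))) ?_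
      filter_upwards [kap_ae n α u k] with v hv
      exact hk v hv
    have i1 : Integrable f (kap n α u k) := by
      have := i3.add i2
      refine this.congr (Eventually.of_forall fun v => ?_)
      simp
    rw [← integral_sub i1 i2, dist_zero_right]
    calc _ ≤ (ε / (2 * (M + 1))) * (kap n α u k).real univ := norm_integral_le_of_norm_le_const (by
            filter_upwards [kap_ae n α u k] with v hv
            exact hk v hv)
      _ ≤ (ε / (2 * (M + 1))) * M := by gcongr; exact hMr k
      _ < ε := by
        rw [div_mul_eq_mul_div, div_lt_iff₀ (by positivity)]
        nlinarith
  have hdiff' := hdiff.mono_left (Nat.hyperfilter_le_atTop)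
  have h7 := hdiff'.add hlim1
  simp only [sub_add_cancel, zero_add] at h7
  have hcx : Tendsto (fun k => cx n α (rs k) x) atTop (𝓝 (cx n α 1 x)) := by
    unfold cx
    apply Tendsto.const_mul
    apply Tendsto.rpow_const
    · exact (rs_lim.pow 2).sub tendsto_const_nhds
    · right; linarith [hα.1]
  have h8 := (hcx.mono_left Nat.hyperfilter_le_atTop).mul h7
  have h9 := tendsto_nhds_unique (hlim2.mono_left Nat.hyperfilter_le_atTop) h8
  rw [h9, ← integral_const_mul]
  congr 1; ext w
  simp only [martinKernel, cx, hf]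
  rw [Real.rpow_neg dist_nonneg, Real.rpow_natCast]
  ring

end St16

namespace St16

lemma dens_conv {n : ℕ} (hn : 2 ≤ n) (z : EuclideanSpace ℝ (Fin n)) (hz : ‖z‖ = 1) (F : ℝ → ℝ≥0∞)
    (h : Tendsto (fun r => F r / tauS n (closedBall z r)) (𝓝[>] 0) (𝓝 0)) (ε : ℝ) (hε : 0 < ε) :
    ∀ᶠ r in 𝓝[>] (0:ℝ), F r ≤ ENNReal.ofReal (ε * r ^ (n - 1)) := by
  have : Fact (2 ≤ n) := ⟨hn⟩
  obtain ⟨K, hK, hKb⟩ := tauS_upper hn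
  obtain ⟨k, hk, hkb⟩ := tauS_lower hn
  have h1 := h.eventually (ge_mem_nhds (show (0:ℝ≥0∞) < ENNReal.ofReal (ε / K) by simp; positivity))
  filter_upwards [h1, Ioc_mem_nhdsGT (zero_lt_one' ℝ)] with r h1 hr
  have hr0 := hr.1
  have hne : tauS n (closedBall z r) ≠ 0 := by
    have h2 := hkb z hz r hr.1 hr.2
    have : 0 < ENNReal.ofReal (k * r ^ (n - 1)) := by simp; positivity
    exact (this.trans_le h2).ne'
  rw [ENNReal.div_le_iff hne (measure_ne_top _ _)] at h1
  calc F r ≤ _ := h1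
    _ ≤ ENNReal.ofReal (ε / K) * ENNReal.ofReal (K * r ^ (n - 1)) := by gcongr; exact hKb z hz r hr.1
    _ = _ := by rw [← ENNReal.ofReal_mul (by positivity)]; congr 1; field_simp

lemma muP_loc {n : ℕ} {α : ℝ} {u : EuclideanSpace ℝ (Fin n) → ℝ} 
    (hfin : ∫⁻ w, ENNReal.ofReal ((‖w‖ ^ n)⁻¹) ∂(muP n α u) ≠ ∞) : IsLocallyFiniteMeasure (muP n α u) := by
  refine ⟨fun y => ⟨ball y 1, ball_mem_nhds y one_pos, ?_⟩⟩
  rw [← setLIntegral_one]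
  calc _ ≤ ∫⁻ w in ball y 1, ENNReal.ofReal ((‖y‖ + 1) ^ n) * ENNReal.ofReal ((‖w‖ ^ n)⁻¹) ∂(muP n α u) := by
        apply lintegral_mono_ae
        filter_upwards [ae_restrict_mem measurableSet_ball, ae_restrict_of_ae (muP_ae n α u)] with w hw hw1
        rw [← ENNReal.ofReal_mul (by positivity), ← ENNReal.ofReal_one]
        apply ENNReal.ofReal_le_ofReal
        have h0 : 0 < ‖w‖ := by linarith
        rw [← div_eq_mul_inv, le_div_iff₀ (by positivity), one_mul]
        apply pow_le_pow_left₀ h0.le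
        have := norm_sub_norm_le w y
        rw [mem_ball, dist_eq_norm] at hw; linarith
    _ ≤ ∫⁻ w, ENNReal.ofReal ((‖y‖ + 1) ^ n) * ENNReal.ofReal ((‖w‖ ^ n)⁻¹) ∂(muP n α u) := setLIntegral_le_lintegral _ _
    _ < ∞ := by
        rw [lintegral_const_mul _ (by fun_prop)]
        exact ENNReal.mul_lt_top ENNReal.ofReal_lt_top hfin.lt_top

lemma muP_sing (n : ℕ) (α : ℝ) (u : EuclideanSpace ℝ (Fin n) → ℝ) : muP n α u ⟂ₘ tauS n := by
  refine ⟨sphere 0 1, isClosed_sphere.measurableSet, ?_, ?_⟩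
  · rw [measure_eq_zero_iff_ae_notMem]
    filter_upwards [muP_ae n α u] with w hw
    simp only [mem_sphere, dist_zero_right]
    exact hw.ne'
  · rw [measure_eq_zero_iff_ae_notMem]
    filter_upwards [tauS_ae n] with w hw
    simpa using hw

noncomputable def mz (n : ℕ) (α : ℝ) (u φ : EuclideanSpace ℝ (Fin n) → ℝ) (z : EuclideanSpace ℝ (Fin n)) : Measure (EuclideanSpace ℝ (Fin n)) :=
  ENNReal.ofReal (Cn n α) • muP n α u + (tauS n).withDensity (fun w => ‖φ w - φ z‖ₑ)

lemma mz_lim {n : ℕ} (hn : 2 ≤ n) {α : ℝ} (hα : α ∈ Ioo (0:ℝ) 2) {u φ : EuclideanSpace ℝ (Fin n) → ℝ} 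
    (hfin : ∫⁻ w, ENNReal.ofReal ((‖w‖ ^ n)⁻¹) ∂(muP n α u) ≠ ∞) (hφm : Measurable φ) (hφ : Integrable φ (tauS n)) :
    ∀ᵐ z ∂(tauS n), Tendsto (fun δ : ℝ => ENNReal.ofReal δ * ∫⁻ v, ENNReal.ofReal ((δ + dist v z) ^ n)⁻¹ ∂(mz n α u φ z)) (𝓝[>] 0) (𝓝 0) := by
  have : Fact (2 ≤ n) := ⟨hn⟩
  have := muP_loc hfin
  have hCn := Cn_pos hn hα
  have h1 := (Besicovitch.vitaliFamily (tauS n)).ae_tendsto_lintegral_enorm_sub_div_of_integrable hφ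
  have h2 := Besicovitch.ae_tendsto_rnDeriv (muP n α u) (tauS n)
  have h3 := (muP_sing n α u).rnDeriv_ae_eq_zero
  filter_upwards [h1, h2, h3, tauS_ae n] with z h1 h2 h3 hz
  have h1 := h1.comp (Besicovitch.tendsto_filterAt (tauS n) z)
  rw [h3] at h2
  simp only [Function.comp_def] at h1
  have d1 := dens_conv hn z hz _ h1
  have d2 := dens_conv hn z hz _ h2
  refine dens_zero hn _ z ?_ ?_
  · unfold mz
    rw [lintegral_add_measure, lintegral_smul_measure, ENNReal.add_ne_top]
    constructor
    · apply ENNReal.mul_ne_top ENNReal.ofReal_ne_top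
      refine ne_top_of_le_ne_top hfin (lintegral_mono_ae ?_)
      filter_upwards [muP_ae n α u] with v hv
      apply ENNReal.ofReal_le_ofReal
      apply inv_anti₀ (pow_pos (by linarith) _)
      apply pow_le_pow_left₀ (by linarith)
      have := norm_sub_norm_le v z
      rw [dist_eq_norm]; linarith
    · have hi : Integrable (fun w => φ w - φ z) (tauS n) := hφ.sub (integrable_const _)
      have : ∫⁻ w, ‖φ w - φ z‖ₑ ∂(tauS n) ≠ ∞ := hi.2.ne
      rw [lintegral_withDensity_eq_lintegral_mul _ (by fun_prop) (by fun_prop)]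
      refine ne_top_of_le_ne_top this (lintegral_mono fun v => ?_)
      rw [Pi.mul_apply]
      refine mul_le_of_le_one_right' ?_
      rw [← ENNReal.ofReal_one]
      apply ENNReal.ofReal_le_ofReal
      apply inv_le_one_of_one_le₀
      apply one_le_pow₀
      linarith [dist_nonneg (x := v) (y := z)]
  · intro ε hε
    filter_upwards [d1 (ε / 2) (by positivity), d2 (ε / 2 / Cn n α) (by positivity), self_mem_nhdsWithin] with r e1 e2 hr
    have hr : 0 < r := hr
    unfold mz
    rw [Measure.add_apply, Measure.smul_apply, smul_eq_mul, withDensity_apply _ measurableSet_closedBall]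
    calc _ ≤ ENNReal.ofReal (Cn n α) * ENNReal.ofReal (ε / 2 / Cn n α * r ^ (n - 1)) + ENNReal.ofReal (ε / 2 * r ^ (n - 1)) := by gcongr
      _ = _ := by
        rw [← ENNReal.ofReal_mul hCn.le, ← ENNReal.ofReal_add (by positivity) (by positivity)]
        congr 1; field_simp; ring

lemma stolz_geo {n : ℕ} {β : ℝ} {z x w : EuclideanSpace ℝ (Fin n)} (hx : x ∈ stolzSet n β z) (hw : 1 ≤ ‖w‖) (hβ : 1 < β) :
    (dist x w ^ n)⁻¹ ≤ (2 + β) ^ n * (((1 - ‖x‖) + dist w z) ^ n)⁻¹ := by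
  obtain ⟨h1, -, h3⟩ := hx
  have h1 : ‖x‖ < 1 := by simpa using h1
  have e1 : 1 - ‖x‖ ≤ dist x w := by
    have := norm_sub_norm_le w x
    rw [dist_eq_norm, norm_sub_rev]; linarith
  have e2 : dist w z ≤ dist x w + dist x z := by rw [dist_comm x w]; exact dist_triangle _ _ _
  have e3 : (1 - ‖x‖) + dist w z ≤ (2 + β) * dist x w := by nlinarith
  have h0 : 0 < (1 - ‖x‖) + dist w z := by linarith [dist_nonneg (x := w) (y := z)]
  have h0' : 0 < dist x w := by linarith
  rw [← div_eq_mul_inv, le_div_iff₀ (by positivity), inv_mul_le_iff₀ (by positivity), ← mul_pow, mul_comm (dist x w)]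
  exact pow_le_pow_left₀ h0.le e3 _

lemma kern_b {n : ℕ} {x w : EuclideanSpace ℝ (Fin n)} (hx : ‖x‖ < 1) (hw : ‖w‖ = 1) : ‖(dist x w ^ n)⁻¹‖ ≤ ((1 - ‖x‖) ^ n)⁻¹ := by
  rw [Real.norm_eq_abs, abs_of_nonneg (by positivity)]
  apply inv_anti₀ (pow_pos (by linarith) _)
  apply pow_le_pow_left₀ (by linarith)
  have := norm_sub_norm_le w x
  rw [dist_eq_norm, norm_sub_rev]; linarith

lemma h_lower {n : ℕ} (hn : 2 ≤ n) {β : ℝ} (hβ : 1 < β) : ∃ k : ℝ, 0 < k ∧ ∀ z x : EuclideanSpace ℝ (Fin n), ‖z‖ = 1 → x ∈ stolzSet n β z →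
    k / (1 - ‖x‖) ≤ ∫ w, (dist x w ^ n)⁻¹ ∂(tauS n) := by
  have : Fact (2 ≤ n) := ⟨hn⟩
  obtain ⟨k, hk, hkb⟩ := tauS_lower hn
  refine ⟨k / (β + 1) ^ n, by positivity, fun z x hz hx => ?_⟩
  obtain ⟨h1, h2, h3⟩ := hx
  have h1 : ‖x‖ < 1 := by simpa using h1
  set δ := 1 - ‖x‖ with hδ
  have hδ0 : 0 < δ := by rw [hδ]; linarith
  have hi : Integrable (fun w => (dist x w ^ n)⁻¹) (tauS n) := by
    refine Integrable.of_bound (by fun_prop) (((1 - ‖x‖) ^ n)⁻¹) ?_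
    filter_upwards [tauS_ae n] with w hw using kern_b h1 hw
  have h4 := hkb z hz δ hδ0 (by linarith)
  have h5 : k * δ ^ (n - 1) ≤ (tauS n).real (closedBall z δ) := by
    rw [Measure.real, ← ENNReal.ofReal_le_iff_le_toReal (measure_ne_top _ _)]; exact h4
  have hcst : ∫ w in closedBall z δ, (((β + 1) * δ) ^ n)⁻¹ ∂(tauS n) = (tauS n).real (closedBall z δ) * (((β + 1) * δ) ^ n)⁻¹ := by
    rw [setIntegral_const, smul_eq_mul]
  calc _ = (k * δ ^ (n - 1)) * (((β + 1) * δ) ^ n)⁻¹ := by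
        obtain ⟨m, rfl⟩ : ∃ m, n = m + 1 := ⟨n - 1, by omega⟩
        simp only [Nat.add_sub_cancel]
        rw [mul_pow]
        field_simp
        ring
    _ ≤ (tauS n).real (closedBall z δ) * (((β + 1) * δ) ^ n)⁻¹ := by gcongr
    _ ≤ ∫ w in closedBall z δ, (dist x w ^ n)⁻¹ ∂(tauS n) := by
        rw [← hcst]
        refine integral_mono_ae (integrable_const _) hi.restrict ?_
        filter_upwards [ae_restrict_mem measurableSet_closedBall, ae_restrict_of_ae (tauS_ae n)] with w hw hw1
        have e0 : 0 < dist x w := by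
          have := norm_sub_norm_le w x
          rw [dist_eq_norm, norm_sub_rev]; linarith
        apply inv_anti₀ (by positivity)
        apply pow_le_pow_left₀ e0.le
        have := dist_triangle_right x w z
        rw [mem_closedBall] at hw
        linarith
    _ ≤ _ := setIntegral_le_integral hi (Eventually.of_forall fun w => by simp only [Pi.zero_apply]; positivity)

end St16

namespace St16

set_option maxHeartbeats 1000000 in
lemma main_bound {n : ℕ} (hn : 2 ≤ n) {α : ℝ} (hα : α ∈ Ioo (0:ℝ) 2) {u φ : EuclideanSpace ℝ (Fin n) → ℝ}
    (hu : IsAlphaHarmonic n α (ball (0 : EuclideanSpace ℝ (Fin n)) 1) u) 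
    (hφm : Measurable φ) (hφ : Integrable φ (tauS n))
    (hr : ∀ x, ‖x‖ < 1 → gu n α u x = ∫ w, martinKernel n α x w * φ w ∂(tauS n)) {β : ℝ} (hβ : 1 < β) {k : ℝ} (hk : 0 < k)
    {z x : EuclideanSpace ℝ (Fin n)} (hz : ‖z‖ = 1) (hx : x ∈ stolzSet n β z) 
    (hH : k / (1 - ‖x‖) ≤ ∫ w, (dist x w ^ n)⁻¹ ∂(tauS n)) :
    ‖u x / (∫ w, martinKernel n α x w ∂(tauS n)) - φ z‖ₑ ≤ ENNReal.ofReal ((2 + β) ^ n / k) * 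
      (ENNReal.ofReal (1 - ‖x‖) * ∫⁻ v, ENNReal.ofReal (((1 - ‖x‖) + dist v z) ^ n)⁻¹ ∂(mz n α u φ z)) := by
  have : Fact (2 ≤ n) := ⟨hn⟩
  have hx1 : ‖x‖ < 1 := by simpa using hx.1
  have hCn := Cn_pos hn hα
  set δ := 1 - ‖x‖ with hδ
  have hδ0 : 0 < δ := by rw [hδ]; linarith
  set f : EuclideanSpace ℝ (Fin n) → ℝ := fun w => (dist x w ^ n)⁻¹ with hf
  have hfm : Measurable f := by rw [hf]; fun_prop
  have hf0 : ∀ w, 0 ≤ f w := fun w => by simp only [hf]; positivity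
  set q := (1 - ‖x‖ ^ 2) ^ (α / 2) with hq
  have hq0 : 0 < q := Real.rpow_pos_of_pos (by nlinarith [norm_nonneg x]) _
  set H := ∫ w, f w ∂(tauS n) with hHd
  have hH0 : 0 < H := lt_of_lt_of_le (by positivity) hH
  have hM : ∀ w, martinKernel n α x w = q * f w := by
    intro w
    simp only [martinKernel, hf]
    rw [Real.rpow_neg dist_nonneg, Real.rpow_natCast]
  have hfi : Integrable f (tauS n) := by
    refine Integrable.of_bound hfm.aestronglyMeasurable (((1 - ‖x‖) ^ n)⁻¹) ?_
    filter_upwards [tauS_ae n] with w hw using kern_b hx1 hw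
  have hfφ : Integrable (fun w => f w * φ w) (tauS n) := by
    refine hφ.bdd_mul (c := ((1 - ‖x‖) ^ n)⁻¹) hfm.aestronglyMeasurable ?_
    filter_upwards [tauS_ae n] with w hw using kern_b hx1 hw
  have hPfin := (step1 hn hα hu hx1).1
  rw [Iu_muP hu.1 hu.2.1] at hPfin
  set Pn := ∫⁻ w, ENNReal.ofReal (f w) ∂(muP n α u) with hPn
  have hux : u x = q * (Cn n α * Pn.toReal + ∫ w, f w * φ w ∂(tauS n)) := by
    have h1 := hr x hx1
    simp_rw [hM, mul_assoc] at h1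
    rw [integral_const_mul] at h1
    have h2 : (Pe n α u x).toReal = q * (Cn n α * Pn.toReal) := by
      unfold Pe
      rw [ENNReal.toReal_mul, ENNReal.toReal_ofReal (cx_pos hn hα hx1).le, Iu_muP hu.1 hu.2.1]
      simp only [cx, hq, one_pow]
      ring
    have : u x = gu n α u x + (Pe n α u x).toReal := by unfold gu; ring
    rw [this, h1, h2]; ring
  have hden : ∫ w, martinKernel n α x w ∂(tauS n) = q * H := by
    simp_rw [hM]; rw [integral_const_mul]
  have hkey : u x / (∫ w, martinKernel n α x w ∂(tauS n)) - φ z = H⁻¹ * (Cn n α * Pn.toReal + ∫ w, f w * (φ w - φ z) ∂(tauS n)) := by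
    have e : ∫ w, f w * (φ w - φ z) ∂(tauS n) = ∫ w, f w * φ w ∂(tauS n) - H * φ z := by
      simp_rw [mul_sub]
      rw [integral_sub hfφ (hfi.mul_const _), integral_mul_const]
    rw [hden, hux, e]
    field_simp
    ring
  rw [hkey, enorm_mul]
  have e1 : ‖H⁻¹‖ₑ ≤ ENNReal.ofReal (δ / k) := by
    have h1 : H⁻¹ ≤ δ / k := by
      calc H⁻¹ ≤ (k / δ)⁻¹ := inv_anti₀ (div_pos hk hδ0) hH
        _ = δ / k := inv_div _ _
    rw [Real.enorm_eq_ofReal (inv_nonneg.2 hH0.le)]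
    exact ENNReal.ofReal_le_ofReal h1
  have e2 : ‖Cn n α * Pn.toReal + ∫ w, f w * (φ w - φ z) ∂(tauS n)‖ₑ ≤ ∫⁻ w, ENNReal.ofReal (f w) ∂(mz n α u φ z) := by
    unfold mz
    rw [lintegral_add_measure, lintegral_smul_measure, lintegral_withDensity_eq_lintegral_mul _ (by fun_prop) (by fun_prop)]
    refine (enorm_add_le _ _).trans (add_le_add ?_ ?_)
    · rw [enorm_mul, Real.enorm_eq_ofReal hCn.le, Real.enorm_eq_ofReal ENNReal.toReal_nonneg, ENNReal.ofReal_toReal hPfin, smul_eq_mul]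
    · refine (enorm_integral_le_lintegral_enorm _).trans (le_of_eq (lintegral_congr fun w => ?_))
      rw [enorm_mul, Pi.mul_apply, Real.enorm_eq_ofReal (hf0 w), mul_comm]
  have hae : ∀ᵐ w ∂(mz n α u φ z), 1 ≤ ‖w‖ := by
    unfold mz
    rw [ae_add_measure_iff]
    constructor
    · exact Measure.ae_smul_measure ((muP_ae n α u).mono fun w hw => hw.le) _
    · exact (withDensity_absolutelyContinuous _ _).ae_le ((tauS_ae n).mono fun w hw => hw.ge)
  have e3 : ∫⁻ w, ENNReal.ofReal (f w) ∂(mz n α u φ z) ≤ ENNReal.ofReal ((2 + β) ^ n) * ∫⁻ v, ENNReal.ofReal ((δ + dist v z) ^ n)⁻¹ ∂(mz n α u φ z) := by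
    rw [← lintegral_const_mul _ (by fun_prop)]
    apply lintegral_mono_ae
    filter_upwards [hae] with w hw
    rw [← ENNReal.ofReal_mul (by positivity)]
    exact ENNReal.ofReal_le_ofReal (stolz_geo hx hw hβ)
  calc _ ≤ ENNReal.ofReal (δ / k) * (ENNReal.ofReal ((2 + β) ^ n) * ∫⁻ v, ENNReal.ofReal ((δ + dist v z) ^ n)⁻¹ ∂(mz n α u φ z)) :=
        mul_le_mul' e1 (e2.trans e3)
    _ = _ := by
        rw [← mul_assoc, ← mul_assoc, ← ENNReal.ofReal_mul (by positivity), ← ENNReal.ofReal_mul (by positivity)]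
        congr 2; ring

lemma nt_lim {n : ℕ} (hn : 2 ≤ n) {α : ℝ} (hα : α ∈ Ioo (0:ℝ) 2) {u φ : EuclideanSpace ℝ (Fin n) → ℝ}
    (hu : IsAlphaHarmonic n α (ball (0 : EuclideanSpace ℝ (Fin n)) 1) u) 
    (hφm : Measurable φ) (hφ : Integrable φ (tauS n))
    (hr : ∀ x, ‖x‖ < 1 → gu n α u x = ∫ w, martinKernel n α x w * φ w ∂(tauS n)) :
    ∀ᵐ z ∂(tauS n), ∀ β : ℝ, 1 < β → Tendsto (fun x => u x / ∫ w, martinKernel n α x w ∂(tauS n)) (𝓝[stolzSet n β z] z) (𝓝 (φ z)) := by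
  have hfin := (step1 hn hα hu (x := 0) (by simp)).1
  rw [Iu_muP hu.1 hu.2.1] at hfin
  simp only [dist_zero_left] at hfin
  filter_upwards [mz_lim hn hα hfin hφm hφ, tauS_ae n] with z hzl hz β hβ
  obtain ⟨k, hk, hkb⟩ := h_lower hn hβ
  rw [tendsto_iff_edist_tendsto_0]
  have hδ : Tendsto (fun x : EuclideanSpace ℝ (Fin n) => 1 - ‖x‖) (𝓝[stolzSet n β z] z) (𝓝[>] 0) := by
    apply tendsto_nhdsWithin_of_tendsto_nhds_of_eventually_within
    · have : Tendsto (fun x : EuclideanSpace ℝ (Fin n) => 1 - ‖x‖) (𝓝 z) (𝓝 (1 - ‖z‖)) := 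
        (continuous_const.sub continuous_norm).tendsto z
      rw [hz, sub_self] at this
      exact this.mono_left nhdsWithin_le_nhds
    · filter_upwards [self_mem_nhdsWithin] with x hx
      have hx1 : ‖x‖ < 1 := by simpa using hx.1
      simpa using hx1
  have hb := ENNReal.Tendsto.const_mul (a := ENNReal.ofReal ((2 + β) ^ n / k)) (hzl.comp hδ) (Or.inr ENNReal.ofReal_ne_top)
  rw [mul_zero] at hb
  refine tendsto_of_tendsto_of_tendsto_of_le_of_le' tendsto_const_nhds hb (Eventually.of_forall fun _ => zero_le) ?_
  filter_upwards [self_mem_nhdsWithin] with x hx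
  rw [edist_eq_enorm_sub]
  exact main_bound hn hα hu hφm hφ hr hβ hk hz hx (hkb z x hz hx)

end St16

open St16
theorem stmt16 (n : ℕ) (hn : 2 ≤ n) (α : ℝ) (hα : α ∈ Set.Ioo (0 : ℝ) 2)
    (u : EuclideanSpace ℝ (Fin n) → ℝ)
    (hu : IsAlphaHarmonic n α (ball (0 : EuclideanSpace ℝ (Fin n)) 1) u)
    (hupos : ∀ x ∈ ball (0 : EuclideanSpace ℝ (Fin n)) 1, 0 < u x)
    (c : ℝ) (hc : 0 < c)
    (hbd : ∀ x ∈ ball (0 : EuclideanSpace ℝ (Fin n)) 1,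
      0 ≤ u x - (∫ v in {v : EuclideanSpace ℝ (Fin n) | 1 < ‖v‖},
          stablePoissonKernel n α 0 1 x v * u v) ∧
      u x - (∫ v in {v : EuclideanSpace ℝ (Fin n) | 1 < ‖v‖},
          stablePoissonKernel n α 0 1 x v * u v) ≤ c * (1 - ‖x‖) ^ (α / 2 - 1)) :
    ∃ φ : EuclideanSpace ℝ (Fin n) → ℝ, Measurable φ ∧ (∀ w, 0 ≤ φ w) ∧
      (∀ᵐ z ∂(μH[(n : ℝ) - 1].restrict (sphere (0 : EuclideanSpace ℝ (Fin n)) 1)),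
        ∀ β : ℝ, 1 < β →
          Tendsto (fun x => u x /
              ∫ w in sphere (0 : EuclideanSpace ℝ (Fin n)) 1,
                martinKernel n α x w ∂μH[(n : ℝ) - 1])
            (nhdsWithin z (stolzSet n β z)) (nhds (φ z))) ∧
      (∀ x ∈ ball (0 : EuclideanSpace ℝ (Fin n)) 1,
        u x = (∫ v in {v : EuclideanSpace ℝ (Fin n) | 1 < ‖v‖},
            stablePoissonKernel n α 0 1 x v * u v) +
          ∫ w in sphere (0 : EuclideanSpace ℝ (Fin n)) 1,
            martinKernel n α x w * φ w ∂μH[(n : ℝ) - 1]) := by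
  have hge : ∀ x, ‖x‖ < 1 → gu n α u x = u x - (∫ v in {v : EuclideanSpace ℝ (Fin n) | 1 < ‖v‖},
          stablePoissonKernel n α 0 1 x v * u v) := by
    intro x hx
    rw [(step1 hn hα hu hx).2.1]; rfl
  have hb : ∀ x : EuclideanSpace ℝ (Fin n), ‖x‖ < 1 → x ∈ ball (0 : EuclideanSpace ℝ (Fin n)) 1 := fun x hx => by simpa using hx
  obtain ⟨φ, hφm, hφ0, hφi, hφ⟩ := repr_aux hn hα c hc hu
    (fun x hx => by rw [hge x hx]; exact (hbd x (hb x hx)).1) (fun x hx => by rw [hge x hx]; exact (hbd x (hb x hx)).2)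
  refine ⟨φ, hφm, hφ0, nt_lim hn hα hu hφm hφi hφ, fun x hx => ?_⟩
  have hx1 : ‖x‖ < 1 := by simpa using hx
  have h1 := hφ x hx1
  rw [hge x hx1] at h1
  change _ = _ + ∫ w, martinKernel n α x w * φ w ∂(tauS n)
  linarith
end

section
/- Let n ≥ 2, α ∈ (0,2), let ν be a nonzero finite Borel measure on the unit sphere S ⊆ ℝⁿ, and define h(x) := ∫_S M(x,w) ν(dw) for x in the open unit ball B. Then there exists a ν-null Borel set N ⊆ S such that for every z ∈ S ∖ N, every y ∈ B, and every β > 1, the limit of g_y(x)/h(x) as x → z with x ∈ A^β_z exists; the exceptional null set N is independent of y. -/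
open Metric Set MeasureTheory Filter

/-- `g_y(x) = |x−y|^{α−n} ∫₀^{w(x,y)} s^{α/2−1} (1+s)^{−n/2} ds` with
`w(x,y) = (1−|x|²)(1−|y|²)/|x−y|²`; up to a positive constant, the Green function of
the unit ball for the symmetric α-stable process. -/
noncomputable def greenFn (n : ℕ) (α : ℝ) (y x : EuclideanSpace ℝ (Fin n)) : ℝ :=
  dist x y ^ (α - (n : ℝ)) *
    ∫ s in (0 : ℝ)..((1 - ‖x‖ ^ 2) * (1 - ‖y‖ ^ 2) / dist x y ^ 2),
      s ^ (α / 2 - 1) * (1 + s) ^ (-(n : ℝ) / 2)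

theorem aux_density (n : ℕ) (hn : 2 ≤ n)
    (ν : Measure (EuclideanSpace ℝ (Fin n))) [IsFiniteMeasure ν]
    (hνS : ν (sphere (0 : EuclideanSpace ℝ (Fin n)) 1)ᶜ = 0) :
    ∀ᵐ z ∂ν, Tendsto (fun r : ℝ => volume (closedBall z r) / ν (closedBall z r))
      (nhdsWithin 0 (Ioi 0)) (nhds 0) := by
  have hs : (volume : Measure (EuclideanSpace ℝ (Fin n))).MutuallySingular ν := by
    refine ⟨sphere 0 1, isClosed_sphere.measurableSet, ?_, hνS⟩
    exact Measure.addHaar_sphere_of_ne_zero _ _ one_ne_zero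
  have h0 := (Measure.rnDeriv_eq_zero _ _).2 hs
  filter_upwards [Besicovitch.ae_tendsto_rnDeriv
    (volume : Measure (EuclideanSpace ℝ (Fin n))) ν, h0] with z h1 h2
  rw [h2] at h1
  exact h1

theorem aux_green (n : ℕ) (α : ℝ) (hα : 0 < α) (x y : EuclideanSpace ℝ (Fin n))
    (hx : ‖x‖ < 1) (hy : ‖y‖ < 1) (hxy : 0 < dist x y) :
    0 ≤ greenFn n α y x ∧ greenFn n α y x ≤
      (2 / α) * (1 - ‖y‖ ^ 2) ^ (α / 2) * dist x y ^ (-(n : ℝ)) * (1 - ‖x‖ ^ 2) ^ (α / 2) := by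
  have hX : 0 < 1 - ‖x‖ ^ 2 := by nlinarith [norm_nonneg x]
  have hY : 0 < 1 - ‖y‖ ^ 2 := by nlinarith [norm_nonneg y]
  unfold greenFn
  set d := dist x y
  set X := 1 - ‖x‖ ^ 2
  set Y := 1 - ‖y‖ ^ 2
  have hw : 0 ≤ X * Y / d ^ 2 := by positivity
  have hI : IntervalIntegrable (fun s : ℝ => s ^ (α / 2 - 1)) volume 0 (X * Y / d ^ 2) :=
    intervalIntegral.intervalIntegrable_rpow' (by linarith)
  have hI2 : IntervalIntegrable (fun s : ℝ => s ^ (α / 2 - 1) * (1 + s) ^ (-(n : ℝ) / 2))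
      volume 0 (X * Y / d ^ 2) := by
    apply hI.mul_continuousOn
    rw [uIcc_of_le hw]
    intro s hs
    apply ContinuousAt.continuousWithinAt
    apply ContinuousAt.rpow_const (by fun_prop)
    left
    have := hs.1
    positivity
  constructor
  · apply mul_nonneg (by positivity)
    apply intervalIntegral.integral_nonneg hw
    intro s hs
    have := hs.1
    positivity
  · have h1 : ∫ s in (0 : ℝ)..(X * Y / d ^ 2), s ^ (α / 2 - 1) * (1 + s) ^ (-(n : ℝ) / 2)
        ≤ ∫ s in (0 : ℝ)..(X * Y / d ^ 2), s ^ (α / 2 - 1) := by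
      apply intervalIntegral.integral_mono_on hw hI2 hI
      intro s hs
      have h0 := hs.1
      apply mul_le_of_le_one_right (by positivity)
      apply Real.rpow_le_one_of_one_le_of_nonpos (by linarith)
      have : (0 : ℝ) ≤ n := by positivity
      linarith
    rw [integral_rpow (Or.inl (by linarith))] at h1
    have e : α / 2 - 1 + 1 = α / 2 := by ring
    rw [e, Real.zero_rpow (by positivity), sub_zero] at h1
    calc _ ≤ d ^ (α - (n : ℝ)) * ((X * Y / d ^ 2) ^ (α / 2) / (α / 2)) := by gcongr
      _ = _ := by
        rw [Real.div_rpow (by positivity) (by positivity), Real.mul_rpow hX.le hY.le,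
          ← Real.rpow_natCast d 2, ← Real.rpow_mul hxy.le, sub_eq_add_neg, Real.rpow_add hxy]
        have : ((2 : ℕ) : ℝ) * (α / 2) = α := by push_cast; ring
        rw [this]
        have : d ^ α ≠ 0 := by positivity
        field_simp

theorem aux_int (n : ℕ) (α : ℝ)
    (ν : Measure (EuclideanSpace ℝ (Fin n))) [IsFiniteMeasure ν]
    (hνS : ν (sphere (0 : EuclideanSpace ℝ (Fin n)) 1)ᶜ = 0)
    (β : ℝ) (hβ : 1 < β) (x z : EuclideanSpace ℝ (Fin n)) (hx : ‖x‖ < 1)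
    (hxz : dist x z < β * (1 - ‖x‖)) :
    (1 - ‖x‖ ^ 2) ^ (α / 2) * (((β + 1) * (1 - ‖x‖)) ^ (-(n : ℝ)) *
      ν.real (closedBall z (1 - ‖x‖))) ≤ ∫ w, martinKernel n α x w ∂ν := by
  have hX : 0 < 1 - ‖x‖ ^ 2 := by nlinarith [norm_nonneg x]
  have hr : 0 < 1 - ‖x‖ := by linarith
  have hae : ∀ᵐ w ∂ν, 1 - ‖x‖ ≤ dist x w := by
    have : ∀ᵐ w ∂ν, w ∈ sphere (0 : EuclideanSpace ℝ (Fin n)) 1 := hνS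
    filter_upwards [this] with w hw
    have h1 : ‖w‖ = 1 := by simpa using hw
    have := norm_sub_norm_le w x
    rw [dist_comm, dist_eq_norm]
    linarith
  have hint : Integrable (fun w => dist x w ^ (-(n : ℝ))) ν := by
    apply Integrable.of_bound (C := (1 - ‖x‖) ^ (-(n : ℝ)))
    · exact ((measurable_const.dist measurable_id).pow_const _).aestronglyMeasurable
    · filter_upwards [hae] with w hw
      rw [Real.norm_of_nonneg (by positivity)]
      exact Real.rpow_le_rpow_of_nonpos hr hw (by simp)
  unfold martinKernel
  rw [integral_const_mul]
  gcongr
  calc _ = ∫ w in closedBall z (1 - ‖x‖), ((β + 1) * (1 - ‖x‖)) ^ (-(n : ℝ)) ∂ν := by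
        rw [setIntegral_const, smul_eq_mul, mul_comm]
    _ ≤ ∫ w in closedBall z (1 - ‖x‖), dist x w ^ (-(n : ℝ)) ∂ν := by
        apply integral_mono_ae (by simp) hint.integrableOn
        filter_upwards [ae_restrict_of_ae hae,
          ae_restrict_mem isClosed_closedBall.measurableSet] with w hw hw2
        apply Real.rpow_le_rpow_of_nonpos (by linarith) _ (by simp)
        have := dist_triangle x z w
        rw [mem_closedBall, dist_comm] at hw2
        linarith
    _ ≤ _ := setIntegral_le_integral hint (Eventually.of_forall fun w => by positivity)

/-- with `h(x) = ∫_S M(x,w) ν(dw)` for a nonzero finite Borel measure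
`ν` on the unit sphere, there is a ν-null Borel set `N ⊆ S` such that for every
`z ∈ S ∖ N`, every `y ∈ B` and every `β > 1`, the nontangential limit of
`g_y(x)/h(x)` at `z` along `A^β_z` exists; the null set `N` is independent of `y`. -/
theorem stmt17 (n : ℕ) (hn : 2 ≤ n) (α : ℝ) (hα : α ∈ Set.Ioo (0 : ℝ) 2)
    (ν : Measure (EuclideanSpace ℝ (Fin n))) [IsFiniteMeasure ν] (hν : ν ≠ 0)
    (hνS : ν (sphere (0 : EuclideanSpace ℝ (Fin n)) 1)ᶜ = 0) :
    ∃ N : Set (EuclideanSpace ℝ (Fin n)),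
      N ⊆ sphere (0 : EuclideanSpace ℝ (Fin n)) 1 ∧ MeasurableSet N ∧ ν N = 0 ∧
      ∀ z ∈ sphere (0 : EuclideanSpace ℝ (Fin n)) 1 \ N,
        ∀ y ∈ ball (0 : EuclideanSpace ℝ (Fin n)) 1,
          ∀ β : ℝ, 1 < β → ∃ L : ℝ,
            Tendsto (fun x => greenFn n α y x / ∫ w, martinKernel n α x w ∂ν)
              (nhdsWithin z (stolzSet n β z)) (nhds L) := by
  have hd := aux_density n hn ν hνS
  obtain ⟨T, hT, hTm, hT0⟩ := exists_measurable_superset_of_null (ae_iff.1 hd)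
  refine ⟨sphere 0 1 ∩ T, inter_subset_left, isClosed_sphere.measurableSet.inter hTm,
    measure_mono_null inter_subset_right hT0, ?_⟩
  rintro z ⟨hz, hzN⟩ y hy β hβ
  have hzT : z ∉ T := fun h => hzN ⟨hz, h⟩
  have hlim : Tendsto (fun r : ℝ => volume (closedBall z r) / ν (closedBall z r))
      (nhdsWithin 0 (Ioi 0)) (nhds 0) := by
    by_contra h
    exact hzT (hT h)
  have hz1 : ‖z‖ = 1 := by simpa using hz
  have hy1 : ‖y‖ < 1 := by simpa using hy
  have hzy : 0 < dist z y := by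
    rw [dist_pos]; rintro rfl; linarith
  refine ⟨0, ?_⟩
  -- the radius tends to zero
  have hr : Tendsto (fun x : EuclideanSpace ℝ (Fin n) => 1 - ‖x‖)
      (nhdsWithin z (stolzSet n β z)) (nhdsWithin 0 (Ioi 0)) := by
    apply tendsto_nhdsWithin_of_tendsto_nhds_of_eventually_within
    · have : Tendsto (fun x : EuclideanSpace ℝ (Fin n) => 1 - ‖x‖) (nhds z) (nhds (1 - ‖z‖)) :=
        (by fun_prop : Continuous fun x : EuclideanSpace ℝ (Fin n) => 1 - ‖x‖).tendsto z
      rw [hz1, sub_self] at this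
      exact this.mono_left nhdsWithin_le_nhds
    · filter_upwards [self_mem_nhdsWithin] with x hx
      have := hx.1
      simpa using this
  have hvpos : 0 < volume.real (ball (0 : EuclideanSpace ℝ (Fin n)) 1) :=
    ENNReal.toReal_pos (measure_ball_pos _ _ one_pos).ne' measure_ball_lt_top.ne
  set V := volume.real (ball (0 : EuclideanSpace ℝ (Fin n)) 1) with hV
  have hlimR : Tendsto (fun r : ℝ => r ^ n / ν.real (closedBall z r))
      (nhdsWithin 0 (Ioi 0)) (nhds 0) := by
    have h1 := ((ENNReal.tendsto_toReal ENNReal.zero_ne_top).comp hlim).const_mul V⁻¹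
    simp only [ENNReal.toReal_zero, mul_zero] at h1
    refine h1.congr' ?_
    filter_upwards [self_mem_nhdsWithin] with r hr
    have hr : 0 < r := hr
    simp only [Function.comp, ENNReal.toReal_div]
    rw [Measure.addHaar_closedBall _ _ hr.le, ENNReal.toReal_mul,
      ENNReal.toReal_ofReal (by positivity), finrank_euclideanSpace_fin]
    change V⁻¹ * (r ^ n * V / ν.real (closedBall z r)) = _
    field_simp
  have hpos : ∀ᶠ r in nhdsWithin (0 : ℝ) (Ioi 0), 0 < ν.real (closedBall z r) := by
    filter_upwards [hlim.eventually_lt_const (u := 1) (by simp), self_mem_nhdsWithin] with r h1 hr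
    have hr : 0 < r := hr
    refine ENNReal.toReal_pos ?_ (measure_ne_top _ _)
    intro h0
    rw [h0, ENNReal.div_zero (measure_closedBall_pos _ _ hr).ne'] at h1
    simp at h1
  have hdist : Tendsto (fun x => dist x y) (nhdsWithin z (stolzSet n β z)) (nhds (dist z y)) :=
    ((by fun_prop : Continuous fun x => dist x y).tendsto z).mono_left nhdsWithin_le_nhds
  have hA : Tendsto (fun x => ((2 / α) * (1 - ‖y‖ ^ 2) ^ (α / 2) * dist x y ^ (-(n : ℝ)) *
      (β + 1) ^ n) * ((1 - ‖x‖) ^ n / ν.real (closedBall z (1 - ‖x‖))))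
      (nhdsWithin z (stolzSet n β z)) (nhds 0) := by
    have := (((hdist.rpow_const (p := -(n : ℝ)) (Or.inl hzy.ne')).const_mul
      ((2 / α) * (1 - ‖y‖ ^ 2) ^ (α / 2))).mul_const ((β + 1) ^ n)).mul (hlimR.comp hr)
    rw [mul_zero] at this
    exact this
  have hev : ∀ᶠ x in nhdsWithin z (stolzSet n β z), x ∈ stolzSet n β z ∧ 0 < dist x y ∧
      0 < ν.real (closedBall z (1 - ‖x‖)) :=
    (eventually_mem_nhdsWithin).and ((hdist.eventually_const_lt hzy).and (hr.eventually hpos))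
  have key : ∀ x : EuclideanSpace ℝ (Fin n), x ∈ stolzSet n β z ∧ 0 < dist x y ∧
      0 < ν.real (closedBall z (1 - ‖x‖)) → 0 ≤ greenFn n α y x / ∫ w, martinKernel n α x w ∂ν ∧
      greenFn n α y x / ∫ w, martinKernel n α x w ∂ν ≤
      ((2 / α) * (1 - ‖y‖ ^ 2) ^ (α / 2) * dist x y ^ (-(n : ℝ)) *
      (β + 1) ^ n) * ((1 - ‖x‖) ^ n / ν.real (closedBall z (1 - ‖x‖))) := by
    rintro x ⟨hx, hxy, hb⟩
    have hx1 : ‖x‖ < 1 := by simpa using hx.1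
    have hr0 : 0 < 1 - ‖x‖ := by linarith
    have hX : 0 < 1 - ‖x‖ ^ 2 := by nlinarith [norm_nonneg x]
    have hY : 0 < 1 - ‖y‖ ^ 2 := by nlinarith [norm_nonneg y]
    have hα0 := hα.1
    obtain ⟨g0, g1⟩ := aux_green n α hα.1 x y hx1 hy1 hxy
    have hi := aux_int n α ν hνS β hβ x z hx1 hx.2.2
    have hβ1 : 0 < β + 1 := by linarith
    have hlow : 0 < (1 - ‖x‖ ^ 2) ^ (α / 2) * (((β + 1) * (1 - ‖x‖)) ^ (-(n : ℝ)) *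
      ν.real (closedBall z (1 - ‖x‖))) := by positivity
    refine ⟨div_nonneg g0 (hlow.le.trans hi), ?_⟩
    refine (div_le_div₀ (by positivity) g1 hlow hi).trans (le_of_eq ?_)
    have hXa : (1 - ‖x‖ ^ 2) ^ (α / 2) ≠ 0 := by positivity
    have e : ((β + 1) * (1 - ‖x‖)) ^ (-(n : ℝ)) = ((β + 1) ^ n * (1 - ‖x‖) ^ n)⁻¹ := by
      rw [Real.rpow_neg (by positivity), Real.rpow_natCast, mul_pow]
    rw [e]
    generalize (1 - ‖x‖ ^ 2) ^ (α / 2) = P at *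
    generalize (1 - ‖y‖ ^ 2) ^ (α / 2) = Q at *
    generalize dist x y ^ (-(n : ℝ)) = R at *
    field_simp
  exact squeeze_zero' (hev.mono fun x hx => (key x hx).1) (hev.mono fun x hx => (key x hx).2) hA
end

section
/- Let n ≥ 2 and α ∈ (0,2). For every y in the open unit ball B ⊆ ℝⁿ and every z on the unit sphere S, the limit of g_y(x)/g_0(x) as x → z with x ∈ B ∖ {0, y} exists and equals (1−|y|²)^{α/2} |y−z|^{−n}, i.e. it equals the Martin kernel M(y,z) of the unit ball. -/
open Metric Set MeasureTheory Filter

lemma green_aux_F (m a : ℝ) (ha : 0 < a) (hm : 0 ≤ m) :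
    Tendsto (fun w : ℝ => (∫ s in (0 : ℝ)..w, s ^ (a - 1) * (1 + s) ^ (-m)) / w ^ a)
      (nhdsWithin 0 (Ioi 0)) (nhds (1 / a)) := by
  have hint : ∀ w : ℝ, IntervalIntegrable (fun s : ℝ => s ^ (a - 1)) volume 0 w := fun w =>
    intervalIntegral.intervalIntegrable_rpow' (by linarith)
  have hI : ∀ w : ℝ, ∫ s in (0 : ℝ)..w, s ^ (a - 1) = w ^ a / a := by
    intro w
    rw [integral_rpow (Or.inl (by linarith))]
    simp [Real.zero_rpow ha.ne']
  have hprod : ∀ w : ℝ, 0 < w →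
      IntervalIntegrable (fun s : ℝ => s ^ (a - 1) * (1 + s) ^ (-m)) volume 0 w := by
    intro w hw
    apply (hint w).mul_continuousOn
    intro s hs
    rw [uIcc_of_le hw.le] at hs
    apply ContinuousAt.continuousWithinAt
    apply ContinuousAt.rpow_const (by fun_prop)
    left
    have := hs.1
    positivity
  have hlow : Tendsto (fun w : ℝ => (1 + w) ^ (-m) * (1 / a)) (nhdsWithin 0 (Ioi 0))
      (nhds (1 / a)) := by
    have : ContinuousAt (fun w : ℝ => (1 + w) ^ (-m) * (1 / a)) 0 := by
      apply ContinuousAt.mul _ continuousAt_const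
      apply ContinuousAt.rpow_const (by fun_prop)
      left; norm_num
    have h2 := this.tendsto.mono_left (nhdsWithin_le_nhds (s := Ioi 0))
    simpa using h2
  refine tendsto_of_tendsto_of_tendsto_of_le_of_le' hlow tendsto_const_nhds ?_ ?_
  · filter_upwards [self_mem_nhdsWithin] with w hw
    have hw : 0 < w := hw
    have hwa : 0 < w ^ a := Real.rpow_pos_of_pos hw a
    rw [le_div_iff₀ hwa]
    calc (1 + w) ^ (-m) * (1 / a) * w ^ a = ∫ s in (0 : ℝ)..w, s ^ (a - 1) * (1 + w) ^ (-m) := by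
          rw [intervalIntegral.integral_mul_const, hI]; ring
      _ ≤ _ := by
          apply intervalIntegral.integral_mono_on hw.le ((hint w).mul_const _) (hprod w hw)
          intro s hs
          have h0 := hs.1
          apply mul_le_mul_of_nonneg_left _ (Real.rpow_nonneg hs.1 _)
          apply Real.rpow_le_rpow_of_nonpos (by positivity) (by linarith [hs.2]) (by linarith)
  · filter_upwards [self_mem_nhdsWithin] with w hw
    have hw : 0 < w := hw
    have hwa : 0 < w ^ a := Real.rpow_pos_of_pos hw a
    rw [div_le_iff₀ hwa]
    calc _ ≤ ∫ s in (0 : ℝ)..w, s ^ (a - 1) := by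
          apply intervalIntegral.integral_mono_on hw.le (hprod w hw) (hint w)
          intro s hs
          have h0 := hs.1
          apply mul_le_of_le_one_right (Real.rpow_nonneg hs.1 _)
          apply Real.rpow_le_one_of_one_le_of_nonpos (by linarith) (by linarith)
      _ = _ := by rw [hI]; ring

lemma green_aux_lim (n : ℕ) (α : ℝ) (hα : 0 < α)
    (y : EuclideanSpace ℝ (Fin n)) (hy : ‖y‖ < 1)
    (z : EuclideanSpace ℝ (Fin n)) (hz : ‖z‖ = 1) :
    Tendsto (fun x => greenFn n α y x / (1 - ‖x‖ ^ 2) ^ (α / 2))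
      (nhdsWithin z (ball (0 : EuclideanSpace ℝ (Fin n)) 1 \ {0, y}))
      (nhds ((1 - ‖y‖ ^ 2) ^ (α / 2) * dist z y ^ (-(n : ℝ)) * (1 / (α / 2)))) := by
  have hzy : z ≠ y := by rintro rfl; linarith
  have hd : 0 < dist z y := dist_pos.2 hzy
  have hy2 : 0 < 1 - ‖y‖ ^ 2 := by nlinarith [norm_nonneg y]
  have hmem : ∀ x ∈ ball (0 : EuclideanSpace ℝ (Fin n)) 1 \ {0, y},
      0 < 1 - ‖x‖ ^ 2 ∧ 0 < dist x y := by
    intro x hx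
    have h1 : ‖x‖ < 1 := by simpa using hx.1
    refine ⟨by nlinarith [norm_nonneg x], dist_pos.2 ?_⟩
    rintro rfl
    exact hx.2 (by simp)
  have hw : Tendsto (fun x => (1 - ‖x‖ ^ 2) * (1 - ‖y‖ ^ 2) / dist x y ^ 2)
      (nhdsWithin z (ball (0 : EuclideanSpace ℝ (Fin n)) 1 \ {0, y}))
      (nhdsWithin 0 (Ioi 0)) := by
    apply tendsto_nhdsWithin_of_tendsto_nhds_of_eventually_within
    · have : ContinuousAt (fun x => (1 - ‖x‖ ^ 2) * (1 - ‖y‖ ^ 2) / dist x y ^ 2) z := by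
        apply ContinuousAt.div (by fun_prop) (by fun_prop) (by positivity)
      have h2 := this.tendsto
      simp only [hz] at h2
      norm_num at h2
      exact h2.mono_left nhdsWithin_le_nhds
    · filter_upwards [self_mem_nhdsWithin] with x hx
      obtain ⟨h1, h2⟩ := hmem x hx
      rw [mem_Ioi]
      positivity
  have hF := (green_aux_F ((n : ℝ) / 2) (α / 2) (by linarith) (by positivity)).comp hw
  have hdc : Tendsto (fun x => (1 - ‖y‖ ^ 2) ^ (α / 2) * dist x y ^ (-(n : ℝ)))
      (nhdsWithin z (ball (0 : EuclideanSpace ℝ (Fin n)) 1 \ {0, y}))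
      (nhds ((1 - ‖y‖ ^ 2) ^ (α / 2) * dist z y ^ (-(n : ℝ)))) := by
    have : ContinuousAt (fun x => (1 - ‖y‖ ^ 2) ^ (α / 2) * dist x y ^ (-(n : ℝ))) z := by
      apply ContinuousAt.mul continuousAt_const
      apply ContinuousAt.rpow_const (by fun_prop)
      left; exact hd.ne'
    exact this.tendsto.mono_left nhdsWithin_le_nhds
  refine (hdc.mul hF).congr' ?_
  filter_upwards [self_mem_nhdsWithin] with x hx
  obtain ⟨h1, h2⟩ := hmem x hx
  simp only [Function.comp, greenFn, neg_div]
  have e1 : ((1 - ‖x‖ ^ 2) * (1 - ‖y‖ ^ 2) / dist x y ^ 2) ^ (α / 2)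
      = (1 - ‖x‖ ^ 2) ^ (α / 2) * (1 - ‖y‖ ^ 2) ^ (α / 2) / dist x y ^ α := by
    rw [Real.div_rpow (by positivity) (by positivity), Real.mul_rpow h1.le hy2.le,
      ← Real.rpow_natCast (dist x y) 2, ← Real.rpow_mul h2.le]
    congr 2
    push_cast; ring
  have e2 : dist x y ^ (α - (n : ℝ)) = dist x y ^ α * dist x y ^ (-(n : ℝ)) := by
    rw [← Real.rpow_add h2]; rfl
  rw [e1, e2]
  have p1 := Real.rpow_pos_of_pos h1 (α / 2)
  have p2 := Real.rpow_pos_of_pos hy2 (α / 2)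
  have p3 := Real.rpow_pos_of_pos h2 α
  field_simp

/-- for every `y` in the open unit ball `B` and every `z` on the unit
sphere, `g_y(x)/g_0(x) → (1−|y|²)^{α/2} |y−z|^{−n} = M(y,z)` as `x → z` with
`x ∈ B ∖ {0, y}`. -/
theorem stmt18 (n : ℕ) (hn : 2 ≤ n) (α : ℝ) (hα : α ∈ Set.Ioo (0 : ℝ) 2)
    (y : EuclideanSpace ℝ (Fin n)) (hy : y ∈ ball (0 : EuclideanSpace ℝ (Fin n)) 1)
    (z : EuclideanSpace ℝ (Fin n)) (hz : z ∈ sphere (0 : EuclideanSpace ℝ (Fin n)) 1) :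
    Tendsto (fun x => greenFn n α y x / greenFn n α 0 x)
      (nhdsWithin z (ball (0 : EuclideanSpace ℝ (Fin n)) 1 \ {0, y}))
      (nhds ((1 - ‖y‖ ^ 2) ^ (α / 2) * dist y z ^ (-(n : ℝ)))) := by
  have hy' : ‖y‖ < 1 := by simpa using hy
  have hz' : ‖z‖ = 1 := by simpa using hz
  have hα0 : 0 < α := hα.1
  have A := green_aux_lim n α hα0 y hy' z hz'
  have B0 := green_aux_lim n α hα0 0 (by simp) z hz'
  have B := B0.mono_left (nhdsWithin_mono z
    (show ball (0 : EuclideanSpace ℝ (Fin n)) 1 \ {0, y} ⊆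
      ball (0 : EuclideanSpace ℝ (Fin n)) 1 \ {0, 0} from by
        intro x hx
        refine ⟨hx.1, fun h => hx.2 ?_⟩
        simp at h
        simp [h]))
  simp only [norm_zero, dist_zero_right, hz'] at B
  norm_num at B
  have C := A.div B (by positivity)
  have e : (1 - ‖y‖ ^ 2) ^ (α / 2) * dist z y ^ (-(n : ℝ)) * (1 / (α / 2)) / (2 / α)
      = (1 - ‖y‖ ^ 2) ^ (α / 2) * dist y z ^ (-(n : ℝ)) := by
    rw [dist_comm z y]; field_simp
  rw [e] at C
  refine C.congr' ?_
  filter_upwards [self_mem_nhdsWithin] with x hx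
  have h1 : ‖x‖ < 1 := by simpa using hx.1
  have h2 : 0 < 1 - ‖x‖ ^ 2 := by nlinarith [norm_nonneg x]
  have p1 := Real.rpow_pos_of_pos h2 (α / 2)
  exact div_div_div_cancel_right₀ p1.ne' _ _
end
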